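/- arXiv:2202.02724 — 2 statements merged into one kernel-verified Lean document; each statement's English description precedes it below -/
import Mathlib

section
/- Global unique continuation from the exterior: Let d ≥ 1, h > 0, s ∈ (0,1) and R ≥ h. Suppose u : ℤ^d → ℝ satisfies u_j = 0 and (−Δ_d)^s u_j = 0 for every j ∈ ℤ^d with |hj| ≥ R (i.e. u and (−Δ_d)^s u vanish on (hℤ)^d outside the Euclidean ball B_R of radius R centered at the origin; since u then has finite support it belongs to ℓ_s, so (−Δ_d)^s u is defined). Then u ≡ 0 on ℤ^d. -/
open scoped BigOperators
open MeasureTheory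

/-- Modified Bessel function of the first kind of integer order `k`. -/
noncomputable def besselI (k : ℤ) (t : ℝ) : ℝ :=
  ∑' ℓ : ℕ, (t / 2) ^ (2 * ℓ + k.natAbs) /
    ((Nat.factorial ℓ : ℝ) * Real.Gamma ((ℓ : ℝ) + (k.natAbs : ℝ) + 1))

/-- Semidiscrete heat kernel `G(m,t) = e^{-2dt} ∏ I_{m_i}(2t)` on `ℤ^d`. -/
noncomputable def heatG (d : ℕ) (m : Fin d → ℤ) (t : ℝ) : ℝ :=
  Real.exp (-(2 * (d : ℝ) * t)) * ∏ i, besselI (m i) (2 * t)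

/-- The discrete kernel `K_s^h(m)`, with `K_s^h(0) = 0`. -/
noncomputable def Ksh (d : ℕ) (h s : ℝ) (m : Fin d → ℤ) : ℝ :=
  if m = 0 then 0
  else h ^ (-(2 * s)) * |Real.Gamma (-s)|⁻¹ *
    ∫ t in Set.Ioi (0 : ℝ), heatG d m t / t ^ (1 + s)

/-- Membership in the space `ℓ_s`. -/
def memLs (d : ℕ) (s : ℝ) (u : (Fin d → ℤ) → ℝ) : Prop :=
  Summable fun m : Fin d → ℤ =>
    |u m| * (1 + Real.sqrt (∑ i, ((m i : ℝ)) ^ 2)) ^ (-((d : ℝ) + 2 * s))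

/-- The fractional discrete Laplacian `(-Δ_d)^s u_j = ∑_{m} (u_j - u_m) K_s^h(j-m)`
(the `m = j` term vanishes since `K_s^h(0) = 0`). -/
noncomputable def fracLap (d : ℕ) (h s : ℝ) (u : (Fin d → ℤ) → ℝ) (j : Fin d → ℤ) : ℝ :=
  ∑' m : Fin d → ℤ, (u j - u m) * Ksh d h s (j - m)

lemma mul_hasSum_aux {ι κ : Type} {f : ι → ℂ} {g : κ → ℂ} {a b : ℂ} (hf : HasSum f a)
    (hg : HasSum g b) (hfn : Summable fun x => ‖f x‖) (hgn : Summable fun x => ‖g x‖) :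
    HasSum (fun p : ι × κ => f p.1 * g p.2) (a * b) := by
  have h := summable_mul_of_summable_norm hfn hgn
  have h2 := tsum_mul_tsum_of_summable_norm hfn hgn
  rw [hf.tsum_eq, hg.tsum_eq] at h2
  rw [h2]
  exact h.hasSum

lemma hasSum_mul_left_aux {ι : Type} {f : ι → ℂ} {a : ℂ} (c : ℂ) (hf : HasSum f a) :
    HasSum (fun i => c * f i) (c * a) := hf.mul_left c

/-- Reindexing of pairs of naturals by difference and minimum. -/
def pairEquiv : ℕ × ℕ ≃ ℤ × ℕ where
  toFun p := ((p.1 : ℤ) - p.2, min p.1 p.2)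
  invFun q := (q.2 + q.1.toNat, q.2 + (-q.1).toNat)
  left_inv p := by
    ext <;> simp <;> omega
  right_inv q := by
    ext <;> simp <;> omega

noncomputable def bterm (k : ℤ) (l : ℕ) (t : ℝ) : ℝ :=
  (2 * t / 2) ^ (2 * l + k.natAbs) /
    ((Nat.factorial l : ℝ) * Real.Gamma ((l : ℝ) + (k.natAbs : ℝ) + 1))

lemma bterm_pair (t θ : ℝ) (p : ℕ × ℕ) :
    ((bterm (pairEquiv p).1 (pairEquiv p).2 t : ℝ) : ℂ) *
      Complex.exp (Complex.I * ((pairEquiv p).1 : ℂ) * θ) =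
    ((t * Complex.exp (Complex.I * θ)) ^ p.1 / (p.1.factorial : ℂ)) *
    ((t * Complex.exp (-(Complex.I * θ))) ^ p.2 / (p.2.factorial : ℂ)) := by
  obtain ⟨a, b⟩ := p
  have hexp : Complex.exp (Complex.I * (((a : ℤ) - (b : ℤ) : ℤ) : ℂ) * θ) =
      Complex.exp (Complex.I * θ) ^ a * Complex.exp (-(Complex.I * θ)) ^ b := by
    rw [← Complex.exp_nat_mul, ← Complex.exp_nat_mul, ← Complex.exp_add]
    congr 1
    push_cast
    ring
  have h1 : bterm ((a : ℤ) - b) (min a b) t =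
      t ^ (a + b) / ((a.factorial : ℝ) * b.factorial) := by
    unfold bterm
    have e1 : 2 * min a b + ((a : ℤ) - b).natAbs = a + b := by omega
    have e2 : ((min a b : ℕ) : ℝ) + ((((a : ℤ) - b).natAbs : ℕ) : ℝ) = ((max a b : ℕ) : ℝ) := by
      rw [← Nat.cast_add]
      congr 1
      omega
    rw [e1, e2, Real.Gamma_nat_eq_factorial, mul_div_cancel_left₀ _ (two_ne_zero)]
    congr 1
    rcases le_total a b with h | h
    · rw [min_eq_left h, max_eq_right h]
    · rw [min_eq_right h, max_eq_left h, mul_comm]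
  simp only [pairEquiv, Equiv.coe_fn_mk]
  rw [hexp, h1, mul_pow, mul_pow]
  push_cast
  rw [pow_add]
  ring

lemma bterm_hasSum (t θ : ℝ) :
    HasSum (fun q : ℤ × ℕ => ((bterm q.1 q.2 t : ℝ) : ℂ) *
      Complex.exp (Complex.I * (q.1 : ℂ) * θ)) (Complex.exp ((2 * t * Real.cos θ : ℝ))) := by
  refine (Equiv.hasSum_iff pairEquiv).1 ?_
  have : ((fun q : ℤ × ℕ => ((bterm q.1 q.2 t : ℝ) : ℂ) *
      Complex.exp (Complex.I * (q.1 : ℂ) * θ)) ∘ pairEquiv) = fun p : ℕ × ℕ =>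
      ((t * Complex.exp (Complex.I * θ)) ^ p.1 / (p.1.factorial : ℂ)) *
      ((t * Complex.exp (-(Complex.I * θ))) ^ p.2 / (p.2.factorial : ℂ)) := by
    funext p
    exact bterm_pair t θ p
  rw [this]
  have hs := NormedSpace.expSeries_div_hasSum_exp (t * Complex.exp (Complex.I * θ))
  have hs2 := NormedSpace.expSeries_div_hasSum_exp (t * Complex.exp (-(Complex.I * θ)))
  have hn := NormedSpace.norm_expSeries_div_summable (t * Complex.exp (Complex.I * θ))
  have hn2 := NormedSpace.norm_expSeries_div_summable (t * Complex.exp (-(Complex.I * θ)))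
  rw [← Complex.exp_eq_exp_ℂ] at hs hs2
  have hv : Complex.exp ((2 * t * Real.cos θ : ℝ)) =
      Complex.exp (t * Complex.exp (Complex.I * θ)) *
      Complex.exp (t * Complex.exp (-(Complex.I * θ))) := by
    rw [← Complex.exp_add]
    congr 1
    push_cast
    rw [Complex.cos]
    ring_nf
  rw [hv]
  have h4 := mul_hasSum_aux hs hs2 hn hn2
  exact h4

lemma bterm_summable (t : ℝ) : Summable (fun q : ℤ × ℕ => bterm q.1 q.2 t) := by
  have := (bterm_hasSum t 0).summable
  simp only [Complex.ofReal_zero, mul_zero, Complex.exp_zero, mul_one] at this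
  exact_mod_cast this

lemma bessel_fiber (k : ℤ) (t : ℝ) : HasSum (fun l => bterm k l t) (besselI k (2 * t)) := by
  have h := (bterm_summable t).prod_factor k
  exact h.hasSum

lemma bterm_nonneg (k : ℤ) (l : ℕ) {t : ℝ} (ht : 0 ≤ t) : 0 ≤ bterm k l t := by
  unfold bterm
  have : 0 < Real.Gamma ((l : ℝ) + (k.natAbs : ℝ) + 1) := Real.Gamma_pos_of_pos (by positivity)
  positivity

lemma bessel_nonneg (k : ℤ) {t : ℝ} (ht : 0 ≤ t) : 0 ≤ besselI k (2 * t) :=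
  (bessel_fiber k t).nonneg fun l => bterm_nonneg k l ht

lemma one_le_bessel {t : ℝ} (ht : 0 ≤ t) : 1 ≤ besselI 0 (2 * t) := by
  have := le_hasSum (bessel_fiber 0 t) 0 (fun l _ => bterm_nonneg 0 l ht)
  simpa [bterm] using this

lemma bessel_hasSum (t θ : ℝ) :
    HasSum (fun k : ℤ => ((besselI k (2 * t) : ℝ) : ℂ) *
      Complex.exp (Complex.I * (k : ℂ) * θ)) (Complex.exp ((2 * t * Real.cos θ : ℝ))) := by
  refine (bterm_hasSum t θ).prod_fiberwise fun k => ?_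
  have := (bessel_fiber k t)
  have h2 : HasSum (fun l => ((bterm k l t : ℝ) : ℂ)) ((besselI k (2 * t) : ℝ) : ℂ) := by
    exact_mod_cast this
  exact h2.mul_right _

lemma bessel_measurable (k : ℤ) : Measurable (fun t : ℝ => besselI k (2 * t)) := by
  refine measurable_of_tendsto_metrizable
    (f := fun n t => ∑ l ∈ Finset.range n, bterm k l t) ?_ ?_
  · intro n
    unfold bterm
    fun_prop
  · rw [tendsto_pi_nhds]
    intro t
    exact (bessel_fiber k t).tendsto_sum_nat

lemma prod_hasSum (d : ℕ) (f : Fin d → ℤ → ℂ) (hf : ∀ i, Summable fun k => ‖f i k‖) :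
    (Summable fun m : Fin d → ℤ => ‖∏ i, f i (m i)‖) ∧
    HasSum (fun m : Fin d → ℤ => ∏ i, f i (m i)) (∏ i, ∑' k, f i k) := by
  induction d with
  | zero =>
    refine ⟨Summable.of_finite, ?_⟩
    simpa using hasSum_unique (fun m : Fin 0 → ℤ => ∏ i, f i (m i))
  | succ d ih =>
    obtain ⟨h1, h2⟩ := ih (fun i => f i.succ) (fun i => hf _)
    have e : ((fun m : Fin (d+1) → ℤ => ∏ i, f i (m i)) ∘ (Fin.consEquiv (fun _ => ℤ))) =
      fun p => f 0 p.1 * ∏ i : Fin d, f i.succ (p.2 i) := by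
      funext p
      simp [Fin.prod_univ_succ, Fin.consEquiv]
    constructor
    · rw [← (Fin.consEquiv (fun _ : Fin (d+1) => ℤ)).summable_iff]
      have := (hf 0).mul_norm h1
      convert this using 2 with p
      simp [Fin.prod_univ_succ, Fin.consEquiv]
    · refine (Equiv.hasSum_iff (Fin.consEquiv (fun _ : Fin (d+1) => ℤ))).1 ?_
      rw [e, Fin.prod_univ_succ]
      have h3 : HasSum (f 0) (∑' k, f 0 k) := (hf 0).of_norm.hasSum
      have h4 := mul_hasSum_aux h3 h2 (hf 0) h1
      exact h4

/-- The symbol of the discrete Laplacian. -/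
noncomputable def lam {d : ℕ} (θ : Fin d → ℝ) : ℝ := ∑ i, (2 - 2 * Real.cos (θ i))

/-- The character. -/
noncomputable def chi {d : ℕ} (θ : Fin d → ℝ) (m : Fin d → ℤ) : ℂ :=
  Complex.exp (Complex.I * ((∑ i, (m i : ℝ) * θ i : ℝ) : ℂ))

lemma norm_chi {d : ℕ} (θ : Fin d → ℝ) (m : Fin d → ℤ) : ‖chi θ m‖ = 1 := by
  unfold chi
  rw [mul_comm]
  exact Complex.norm_exp_ofReal_mul_I _

lemma chi_add {d : ℕ} (θ : Fin d → ℝ) (m n : Fin d → ℤ) : chi θ (m + n) = chi θ m * chi θ n := by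
  unfold chi
  rw [← Complex.exp_add]
  congr 1
  push_cast
  simp only [Pi.add_apply, Int.cast_add, add_mul, Finset.sum_add_distrib, mul_add]

lemma heatG_hasSum {d : ℕ} (θ : Fin d → ℝ) (t : ℝ) :
    HasSum (fun m : Fin d → ℤ => ((heatG d m t : ℝ) : ℂ) * chi θ m)
      ((Real.exp (-(t * lam θ)) : ℝ) : ℂ) := by
  have h := (prod_hasSum d (fun i k => ((besselI k (2 * t) : ℝ) : ℂ) *
      Complex.exp (Complex.I * (k : ℂ) * θ i))
      (fun i => (bessel_hasSum t (θ i)).summable.norm)).2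
  have h2 := hasSum_mul_left_aux ((Real.exp (-(2 * (d : ℝ) * t)) : ℝ) : ℂ) h
  convert h2 using 1
  · funext m
    unfold heatG chi
    rw [Finset.prod_mul_distrib, ← Complex.exp_sum]
    push_cast
    rw [mul_assoc, Finset.mul_sum]
    simp only [mul_assoc]
  · have : ∀ i, ∑' k : ℤ, ((besselI k (2 * t) : ℝ) : ℂ) *
      Complex.exp (Complex.I * (k : ℂ) * θ i) = Complex.exp ((2 * t * Real.cos (θ i) : ℝ)) :=
      fun i => (bessel_hasSum t (θ i)).tsum_eq
    simp only [this]
    rw [← Complex.exp_sum, Complex.ofReal_exp, Complex.ofReal_exp, ← Complex.exp_add]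
    congr 1
    rw [← Complex.ofReal_sum, ← Complex.ofReal_add]
    congr 1
    unfold lam
    rw [Finset.sum_sub_distrib, ← Finset.mul_sum, ← Finset.mul_sum]
    simp
    ring

lemma heatG_nonneg {d : ℕ} (m : Fin d → ℤ) {t : ℝ} (ht : 0 ≤ t) : 0 ≤ heatG d m t := by
  unfold heatG
  exact mul_nonneg (Real.exp_pos _).le (Finset.prod_nonneg fun i _ => bessel_nonneg _ ht)

lemma heatG_zero_ge {d : ℕ} {t : ℝ} (ht : 0 ≤ t) :
    Real.exp (-(2 * (d : ℝ) * t)) ≤ heatG d 0 t := by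
  unfold heatG
  have : 1 ≤ ∏ i : Fin d, besselI ((0 : Fin d → ℤ) i) (2 * t) :=
    Finset.one_le_prod (fun i _ => one_le_bessel ht)
  exact le_mul_of_one_le_right (Real.exp_pos _).le this

lemma heatG_measurable {d : ℕ} (m : Fin d → ℤ) : Measurable (heatG d m) := by
  unfold heatG
  have := fun i => bessel_measurable (m i)
  fun_prop

lemma lam_zero {d : ℕ} : lam (0 : Fin d → ℝ) = 0 := by simp [lam]

lemma chi_zero {d : ℕ} (m : Fin d → ℤ) : chi (0 : Fin d → ℝ) m = 1 := by simp [chi]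

lemma lam_nonneg {d : ℕ} (θ : Fin d → ℝ) : 0 ≤ lam θ :=
  Finset.sum_nonneg fun i _ => by linarith [Real.cos_le_one (θ i)]

lemma heatG_sum_one {d : ℕ} (t : ℝ) : HasSum (fun m : Fin d → ℤ => heatG d m t) 1 := by
  have := heatG_hasSum (0 : Fin d → ℝ) t
  simp only [lam_zero, chi_zero, mul_zero, neg_zero, Real.exp_zero, mul_one] at this
  exact_mod_cast this

lemma frac_integrable {s : ℝ} (hs : s ∈ Set.Ioo (0 : ℝ) 1) {a : ℝ} (ha : 0 ≤ a) :
    IntegrableOn (fun t : ℝ => (1 - Real.exp (-(t * a))) / t ^ (1 + s)) (Set.Ioi 0) := by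
  have hm : Measurable (fun t : ℝ => (1 - Real.exp (-(t * a))) / t ^ (1 + s)) := by fun_prop
  have hun : Set.Ioi (0 : ℝ) = Set.Ioo 0 2 ∪ Set.Ioi 1 := by
    ext x
    simp only [Set.mem_Ioi, Set.mem_union, Set.mem_Ioo]
    constructor
    · intro h
      rcases lt_or_ge 1 x with h1 | h1
      · exact Or.inr h1
      · exact Or.inl ⟨h, by linarith⟩
    · rintro (h | h)
      · exact h.1
      · linarith
  rw [hun]
  apply IntegrableOn.union
  · have h1 : IntegrableOn (fun x : ℝ => a * x ^ (-s)) (Set.Ioo 0 2) :=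
      ((intervalIntegral.integrableOn_Ioo_rpow_iff two_pos).2 (by linarith [hs.2])).const_mul a
    refine Integrable.mono' h1 hm.aestronglyMeasurable ?_
    refine (ae_restrict_iff' measurableSet_Ioo).2 (Filter.Eventually.of_forall fun t ht => ?_)
    have ht0 : 0 < t := ht.1
    have hp : 0 < t ^ (1 + s) := Real.rpow_pos_of_pos ht0 _
    have e1 : 0 ≤ 1 - Real.exp (-(t * a)) := by
      have : Real.exp (-(t * a)) ≤ 1 := Real.exp_le_one_iff.2 (by nlinarith)
      linarith
    have e2 : 1 - Real.exp (-(t * a)) ≤ t * a := by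
      linarith [Real.add_one_le_exp (-(t * a))]
    rw [Real.norm_of_nonneg (div_nonneg e1 hp.le), div_le_iff₀ hp, mul_assoc, ← Real.rpow_add ht0]
    have : -s + (1 + s) = 1 := by ring
    rw [this, Real.rpow_one]
    linarith
  · have h1 : IntegrableOn (fun x : ℝ => x ^ (-(1 + s))) (Set.Ioi 1) :=
      integrableOn_Ioi_rpow_of_lt (by linarith [hs.1]) one_pos
    refine Integrable.mono' h1 hm.aestronglyMeasurable ?_
    refine (ae_restrict_iff' measurableSet_Ioi).2 (Filter.Eventually.of_forall fun t ht => ?_)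
    have ht0 : 0 < t := lt_trans one_pos ht
    have hp : 0 < t ^ (1 + s) := Real.rpow_pos_of_pos ht0 _
    have e1 : 0 ≤ 1 - Real.exp (-(t * a)) := by
      have : Real.exp (-(t * a)) ≤ 1 := Real.exp_le_one_iff.2 (by nlinarith)
      linarith
    rw [Real.norm_of_nonneg (div_nonneg e1 hp.le), Real.rpow_neg ht0.le, div_eq_mul_inv]
    have := Real.exp_pos (-(t * a))
    exact mul_le_of_le_one_left (inv_pos.2 hp).le (by linarith)

/-- The constant in the Mellin-type formula. -/
noncomputable def mconst (s : ℝ) : ℝ :=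
  ∫ t in Set.Ioi (0 : ℝ), (1 - Real.exp (-(t * 1))) / t ^ (1 + s)

lemma frac_integral {s : ℝ} (hs : s ∈ Set.Ioo (0 : ℝ) 1) {a : ℝ} (ha : 0 ≤ a) :
    ∫ t in Set.Ioi (0 : ℝ), (1 - Real.exp (-(t * a))) / t ^ (1 + s) = a ^ s * mconst s := by
  rcases ha.eq_or_lt with rfl | ha
  · simp [Real.zero_rpow hs.1.ne']
  · have h := integral_comp_mul_left_Ioi
      (fun t : ℝ => (1 - Real.exp (-(t * 1))) / t ^ (1 + s)) 0 ha
    rw [mul_zero, smul_eq_mul] at h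
    unfold mconst
    have h2 : ∫ t in Set.Ioi (0 : ℝ), (1 - Real.exp (-(t * a))) / t ^ (1 + s) =
      ∫ t in Set.Ioi (0 : ℝ), a ^ (1 + s) * ((1 - Real.exp (-(a * t * 1))) / (a * t) ^ (1 + s)) := by
      refine setIntegral_congr_fun measurableSet_Ioi fun t ht => ?_
      have ht0 : 0 < t := ht
      have hp : 0 < t ^ (1 + s) := Real.rpow_pos_of_pos ht0 _
      have hq : 0 < a ^ (1 + s) := Real.rpow_pos_of_pos ha _
      rw [Real.mul_rpow ha.le ht0.le, mul_one, mul_comm a t]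
      field_simp
    rw [h2, integral_const_mul, h, ← mul_assoc, Real.rpow_add ha, Real.rpow_one]
    field_simp

lemma mconst_pos {s : ℝ} (hs : s ∈ Set.Ioo (0 : ℝ) 1) : 0 < mconst s := by
  have hpos : ∀ t ∈ Set.Ioi (0 : ℝ), 0 < (1 - Real.exp (-(t * 1))) / t ^ (1 + s) := by
    intro t ht
    have ht0 : 0 < t := ht
    have hp : 0 < t ^ (1 + s) := Real.rpow_pos_of_pos ht0 _
    have : Real.exp (-(t * 1)) < 1 := by
      have h0 := Real.exp_lt_exp.2 (show -(t * 1) < 0 by linarith)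
      rwa [Real.exp_zero] at h0
    exact div_pos (by linarith) hp
  unfold mconst
  rw [setIntegral_pos_iff_support_of_nonneg_ae]
  · have : Set.Ioi (0 : ℝ) ⊆
      Function.support (fun t : ℝ => (1 - Real.exp (-(t * 1))) / t ^ (1 + s)) ∩ Set.Ioi 0 :=
      fun t ht => ⟨(hpos t ht).ne', ht⟩
    refine lt_of_lt_of_le ?_ (measure_mono this)
    simp
  · exact (ae_restrict_iff' measurableSet_Ioi).2
      (Filter.Eventually.of_forall fun t ht => (hpos t ht).le)
  · exact frac_integrable hs zero_le_one

/-- The kernel integrand. -/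
noncomputable def kint (d : ℕ) (s : ℝ) (m : Fin d → ℤ) (t : ℝ) : ℝ :=
  if m = 0 then 0 else heatG d m t / t ^ (1 + s)

lemma kint_hasSum {d : ℕ} (s : ℝ) (θ : Fin d → ℝ) (t : ℝ) :
    HasSum (fun m : Fin d → ℤ => ((kint d s m t : ℝ) : ℂ) * chi θ m)
      (((Real.exp (-(t * lam θ)) - heatG d 0 t) / t ^ (1 + s) : ℝ) : ℂ) := by
  have h1 := heatG_hasSum θ t
  have h2 := h1.sub (hasSum_ite_eq (0 : Fin d → ℤ) ((heatG d 0 t : ℝ) : ℂ))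
  have h3 := hasSum_mul_left_aux (((t ^ (1 + s))⁻¹ : ℝ) : ℂ) h2
  convert h3 using 1
  · funext m
    unfold kint
    by_cases hm : m = 0
    · subst hm
      simp [chi]
    · simp only [hm, if_false]
      push_cast
      ring
  · push_cast
    ring

lemma kint_hasSum_real {d : ℕ} (s : ℝ) (t : ℝ) :
    HasSum (fun m : Fin d → ℤ => kint d s m t) ((1 - heatG d 0 t) / t ^ (1 + s)) := by
  have := kint_hasSum s (0 : Fin d → ℝ) t
  simp only [lam_zero, chi_zero, mul_zero, neg_zero, Real.exp_zero, mul_one] at this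
  exact_mod_cast this

lemma kint_nonneg {d : ℕ} (s : ℝ) (m : Fin d → ℤ) {t : ℝ} (ht : 0 < t) : 0 ≤ kint d s m t := by
  unfold kint
  split_ifs
  · exact le_rfl
  · exact div_nonneg (heatG_nonneg m ht.le) (Real.rpow_pos_of_pos ht _).le

lemma kint_measurable {d : ℕ} (s : ℝ) (m : Fin d → ℤ) : Measurable (kint d s m) := by
  unfold kint
  have := heatG_measurable m
  split_ifs
  · fun_prop
  · fun_prop

lemma g0_integrable {d : ℕ} {s : ℝ} (hs : s ∈ Set.Ioo (0 : ℝ) 1) :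
    IntegrableOn (fun t : ℝ => (1 - heatG d 0 t) / t ^ (1 + s)) (Set.Ioi 0) := by
  have h1 := frac_integrable hs (a := 2 * d) (by positivity)
  have hm : Measurable (fun t : ℝ => (1 - heatG d 0 t) / t ^ (1 + s)) := by
    have := heatG_measurable (0 : Fin d → ℤ)
    fun_prop
  refine Integrable.mono' h1 hm.aestronglyMeasurable ?_
  refine (ae_restrict_iff' measurableSet_Ioi).2 (Filter.Eventually.of_forall fun t ht => ?_)
  have ht0 : 0 < t := ht
  have hp : 0 < t ^ (1 + s) := Real.rpow_pos_of_pos ht0 _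
  have e1 : 0 ≤ (1 - heatG d 0 t) / t ^ (1 + s) :=
    (kint_hasSum_real s t).nonneg fun m => kint_nonneg s m ht0
  rw [Real.norm_of_nonneg e1]
  refine div_le_div_of_nonneg_right ?_ hp.le
  have := heatG_zero_ge (d := d) ht0.le
  rw [show t * (2 * (d : ℝ)) = 2 * d * t by ring]
  linarith

lemma kint_integrable {d : ℕ} {s : ℝ} (hs : s ∈ Set.Ioo (0 : ℝ) 1) (m : Fin d → ℤ) :
    IntegrableOn (kint d s m) (Set.Ioi 0) := by
  refine Integrable.mono' (g0_integrable (d := d) hs) (kint_measurable s m).aestronglyMeasurable ?_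
  refine (ae_restrict_iff' measurableSet_Ioi).2 (Filter.Eventually.of_forall fun t ht => ?_)
  rw [Real.norm_of_nonneg (kint_nonneg s m ht)]
  exact le_hasSum (kint_hasSum_real s t) m fun n _ => kint_nonneg s n ht

lemma kint_summable {d : ℕ} {s : ℝ} (hs : s ∈ Set.Ioo (0 : ℝ) 1) :
    Summable (fun m : Fin d → ℤ => ∫ t in Set.Ioi (0 : ℝ), kint d s m t) := by
  refine summable_of_sum_le (c := ∫ t in Set.Ioi (0 : ℝ), (1 - heatG d 0 t) / t ^ (1 + s))
    (fun m => setIntegral_nonneg measurableSet_Ioi fun t ht => kint_nonneg s m ht) fun S => ?_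
  rw [← integral_finsetSum _ fun m _ => kint_integrable hs m]
  refine setIntegral_mono_on (integrable_finsetSum _ fun m _ => kint_integrable hs m)
    (g0_integrable hs) measurableSet_Ioi fun t ht => ?_
  exact sum_le_hasSum S (fun m _ => kint_nonneg s m ht) (kint_hasSum_real s t)

/-- The normalising constant. -/
noncomputable def cc (h s : ℝ) : ℝ := h ^ (-(2 * s)) * |Real.Gamma (-s)|⁻¹

lemma cc_pos {h s : ℝ} (hh : 0 < h) (hs : s ∈ Set.Ioo (0 : ℝ) 1) : 0 < cc h s := by
  unfold cc
  have : Real.Gamma (-s) ≠ 0 := by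
    apply Real.Gamma_ne_zero
    intro m hm
    have h1 : s = m := by linarith
    have h2 := hs.1
    have h3 := hs.2
    rw [h1] at h2 h3
    have h4 : 0 < m := by exact_mod_cast h2
    have h5 : m < 1 := by exact_mod_cast h3
    omega
  have := abs_pos.2 this
  have := Real.rpow_pos_of_pos hh (-(2 * s))
  positivity

lemma Ksh_eq {d : ℕ} (h s : ℝ) (m : Fin d → ℤ) :
    Ksh d h s m = cc h s * ∫ t in Set.Ioi (0 : ℝ), kint d s m t := by
  unfold Ksh kint cc
  split_ifs <;> simp

lemma Ksh_summable {d : ℕ} {h s : ℝ} (hs : s ∈ Set.Ioo (0 : ℝ) 1) :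
    Summable (fun m : Fin d → ℤ => Ksh d h s m) := by
  simp only [Ksh_eq]
  exact (kint_summable hs).mul_left _

lemma Ksh_hasSum {d : ℕ} {h s : ℝ} (hs : s ∈ Set.Ioo (0 : ℝ) 1) (θ : Fin d → ℝ) :
    HasSum (fun m : Fin d → ℤ => ((Ksh d h s m : ℝ) : ℂ) * chi θ m)
      ((cc h s : ℂ) * ((∫ t in Set.Ioi (0 : ℝ),
        (Real.exp (-(t * lam θ)) - heatG d 0 t) / t ^ (1 + s) : ℝ) : ℂ)) := by
  have key := hasSum_integral_of_summable_integral_norm (μ := volume.restrict (Set.Ioi (0:ℝ)))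
    (F := fun (m : Fin d → ℤ) t => ((kint d s m t : ℝ) : ℂ) * chi θ m)
    (fun m => ((kint_integrable hs m).ofReal (𝕜 := ℂ)).mul_const _) (by
      refine (kint_summable hs).congr fun m => ?_
      refine setIntegral_congr_fun measurableSet_Ioi fun t ht => ?_
      simp only [norm_mul, norm_chi, mul_one, Complex.norm_real]
      exact (Real.norm_of_nonneg (kint_nonneg s m ht)).symm)
  have e : ∀ t, ∑' m : Fin d → ℤ, ((kint d s m t : ℝ) : ℂ) * chi θ m =
      (((Real.exp (-(t * lam θ)) - heatG d 0 t) / t ^ (1 + s) : ℝ) : ℂ) :=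
    fun t => (kint_hasSum s θ t).tsum_eq
  simp only [e] at key
  have e2 : ∀ m : Fin d → ℤ, ∫ t in Set.Ioi (0 : ℝ), ((kint d s m t : ℝ) : ℂ) * chi θ m =
      ((∫ t in Set.Ioi (0 : ℝ), kint d s m t : ℝ) : ℂ) * chi θ m := by
    intro m
    rw [integral_mul_const, integral_complex_ofReal]
  simp only [e2] at key
  rw [integral_complex_ofReal] at key
  have k2 := hasSum_mul_left_aux (cc h s : ℂ) key
  convert k2 using 1
  funext m
  rw [Ksh_eq]
  push_cast
  ring

lemma symbol_eq {d : ℕ} {h s : ℝ} (hs : s ∈ Set.Ioo (0 : ℝ) 1) (θ : Fin d → ℝ) :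
    ((∑' m : Fin d → ℤ, Ksh d h s m : ℝ) : ℂ) - ∑' m : Fin d → ℤ, ((Ksh d h s m : ℝ) : ℂ) * chi θ m
      = ((cc h s * mconst s * (lam θ) ^ s : ℝ) : ℂ) := by
  have h0 := (Ksh_hasSum (h := h) hs (0 : Fin d → ℝ)).tsum_eq
  simp only [lam_zero, chi_zero, mul_zero, neg_zero, Real.exp_zero, mul_one] at h0
  rw [Complex.ofReal_tsum, h0, (Ksh_hasSum (h := h) hs θ).tsum_eq, ← mul_sub, ← Complex.ofReal_sub]
  have hi := g0_integrable (d := d) hs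
  have hj := frac_integrable hs (lam_nonneg θ)
  have e : ∫ t in Set.Ioi (0 : ℝ), (Real.exp (-(t * lam θ)) - heatG d 0 t) / t ^ (1 + s) =
      (∫ t in Set.Ioi (0 : ℝ), (1 - heatG d 0 t) / t ^ (1 + s)) -
      ∫ t in Set.Ioi (0 : ℝ), (1 - Real.exp (-(t * lam θ))) / t ^ (1 + s) := by
    rw [← integral_sub hi hj]
    congr 1
    funext t
    ring
  rw [e, sub_sub_cancel, frac_integral hs (lam_nonneg θ), ← Complex.ofReal_mul]
  congr 1
  ring

open Filter Topology in
lemma pow_lim_aux {p : ℝ} (hp : 0 < p) {A B : ℝ → ℝ} (hA : ContinuousAt A 0)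
    (hB : ContinuousAt B 0) (h : ∀ᶠ x in 𝓝[>] (0 : ℝ), x ^ p * A x = B x) : B 0 = 0 := by
  have h1 : Tendsto (fun x : ℝ => x ^ p) (𝓝[>] 0) (𝓝 0) := by
    have := (Real.continuousAt_rpow_const 0 p (Or.inr hp.le)).tendsto
    rw [Real.zero_rpow hp.ne'] at this
    exact this.mono_left nhdsWithin_le_nhds
  have h2 : Tendsto A (𝓝[>] 0) (𝓝 (A 0)) := hA.tendsto.mono_left nhdsWithin_le_nhds
  have h3 : Tendsto B (𝓝[>] 0) (𝓝 (B 0)) := hB.tendsto.mono_left nhdsWithin_le_nhds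
  have h4 := h1.mul h2
  rw [zero_mul] at h4
  exact tendsto_nhds_unique (h3.congr' (h.mono fun x hx => hx.symm)) h4

open Filter Topology in
lemma anal_contra {U F : ℝ → ℂ} (hU : AnalyticAt ℝ U 0) (hF : AnalyticAt ℝ F 0)
    {g : ℝ → ℝ} (hg : ContinuousAt g 0) (hg0 : 0 < g 0) {s : ℝ} (hs : s ∈ Set.Ioo (0 : ℝ) 1)
    {C : ℝ} (hC : 0 < C) (hFU : ∀ x, F x = U x * ((C * (x ^ 2 * g x) ^ s : ℝ) : ℂ)) :
    ∀ᶠ x in 𝓝 (0 : ℝ), U x = 0 := by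
  by_contra hne
  obtain ⟨n, U1, hU1, hU10, hUe⟩ := hU.exists_eventuallyEq_pow_smul_nonzero_iff.2 hne
  have hgpos : ∀ᶠ x in 𝓝 (0 : ℝ), 0 < g x := hg.eventually (lt_mem_nhds hg0)
  have hFne : ¬ ∀ᶠ x in 𝓝 (0 : ℝ), F x = 0 := by
    intro hF0
    have hU1ne : ∀ᶠ x in 𝓝 (0 : ℝ), U1 x ≠ 0 := hU1.continuousAt.eventually_ne hU10
    have := (hF0.and (hU1ne.and (hgpos.and hUe))).filter_mono
      (nhdsWithin_le_nhds (s := Set.Ioi (0 : ℝ)))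
    obtain ⟨x, ⟨h1, h2, h3, h4⟩, h5⟩ := (this.and self_mem_nhdsWithin).exists
    have hx : 0 < x := h5
    rw [hFU, h4, sub_zero] at h1
    have h6 : 0 < C * (x ^ 2 * g x) ^ s := by positivity
    have h7 : ((C * (x ^ 2 * g x) ^ s : ℝ) : ℂ) ≠ 0 := by exact_mod_cast h6.ne'
    have h8 : x ^ n ≠ 0 := by positivity
    exact (mul_ne_zero (smul_ne_zero h8 h2) h7) h1
  obtain ⟨k, F1, hF1, hF10, hFe⟩ := hF.exists_eventuallyEq_pow_smul_nonzero_iff.2 hFne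
  -- the main identity
  have main : ∀ᶠ x in 𝓝 (0 : ℝ), ((x ^ k : ℝ) : ℂ) * F1 x =
      ((x ^ n * |x| ^ (2 * s) : ℝ) : ℂ) * (U1 x * ((C * g x ^ s : ℝ) : ℂ)) := by
    filter_upwards [hUe, hFe, hgpos] with x h1 h2 h3
    rw [sub_zero] at h1 h2
    have e : (x ^ 2) ^ s = |x| ^ (2 * s) := by
      rw [← sq_abs, Real.rpow_mul (abs_nonneg x), Real.rpow_two]
    rw [← Complex.real_smul, ← h2, hFU, h1, Complex.real_smul, Real.mul_rpow (sq_nonneg x) h3.le, e]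
    push_cast
    ring
  have hV : ContinuousAt (fun x => U1 x * ((C * g x ^ s : ℝ) : ℂ)) 0 := by
    refine hU1.continuousAt.mul ?_
    refine Complex.continuous_ofReal.continuousAt.comp ?_
    exact continuousAt_const.mul (hg.rpow_const (Or.inl hg0.ne'))
  have hV0 : U1 0 * ((C * g 0 ^ s : ℝ) : ℂ) ≠ 0 := by
    have : 0 < C * g 0 ^ s := by positivity
    exact mul_ne_zero hU10 (by exact_mod_cast this.ne')
  set V : ℝ → ℂ := fun x => U1 x * ((C * g x ^ s : ℝ) : ℂ) with hVdef
  have mainR : ∀ᶠ x in 𝓝[>] (0 : ℝ), x ^ (k : ℝ) * ‖F1 x‖ = x ^ ((n : ℝ) + 2 * s) * ‖V x‖ := by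
    filter_upwards [main.filter_mono nhdsWithin_le_nhds, self_mem_nhdsWithin] with x h1 h2
    have hx : 0 < x := h2
    have h3 := congrArg norm h1
    rw [norm_mul, norm_mul, Complex.norm_real, Complex.norm_real, abs_of_pos hx,
      Real.norm_of_nonneg (by positivity), Real.norm_of_nonneg (by positivity)] at h3
    rw [Real.rpow_add hx, Real.rpow_natCast, Real.rpow_natCast]
    exact h3
  have hk : (k : ℝ) = n + 2 * s := by
    rcases lt_trichotomy (k : ℝ) (n + 2 * s) with hlt | heq | hgt
    · exfalso
      refine (norm_ne_zero_iff.2 hF10) (pow_lim_aux (p := n + 2 * s - k) (by linarith)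
        (A := fun x => ‖V x‖) (B := fun x => ‖F1 x‖) hV.norm hF1.continuousAt.norm ?_)
      filter_upwards [mainR, self_mem_nhdsWithin] with x h1 h2
      have hx : 0 < x := h2
      have := Real.rpow_pos_of_pos hx (k : ℝ)
      rw [Real.rpow_sub hx, div_mul_eq_mul_div, ← h1, mul_div_cancel_left₀ _ this.ne']
    · exact heq
    · exfalso
      refine (norm_ne_zero_iff.2 hV0) (pow_lim_aux (p := k - (n + 2 * s)) (by linarith)
        (A := fun x => ‖F1 x‖) (B := fun x => ‖V x‖) hF1.continuousAt.norm hV.norm ?_)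
      filter_upwards [mainR, self_mem_nhdsWithin] with x h1 h2
      have hx : 0 < x := h2
      have := Real.rpow_pos_of_pos hx ((n : ℝ) + 2 * s)
      rw [Real.rpow_sub hx, div_mul_eq_mul_div, h1, mul_div_cancel_left₀ _ this.ne']
  have hkn : k = n + 1 := by
    have h1 : (n : ℝ) < k := by rw [hk]; linarith [hs.1]
    have h2 : (k : ℝ) < n + 2 := by rw [hk]; linarith [hs.2]
    have h1' : n < k := by exact_mod_cast h1
    have h2' : k < n + 2 := by exact_mod_cast h2
    omega
  have hs1 : 2 * s = 1 := by
    rw [hkn] at hk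
    push_cast at hk
    linarith
  have right : ∀ᶠ x in 𝓝[>] (0 : ℝ), F1 x = V x := by
    filter_upwards [main.filter_mono nhdsWithin_le_nhds, self_mem_nhdsWithin] with x h1 h2
    have hx : 0 < x := h2
    rw [hs1, Real.rpow_one, abs_of_pos hx, ← pow_succ, ← hkn] at h1
    have h3 : ((x ^ k : ℝ) : ℂ) ≠ 0 := by exact_mod_cast (pow_pos hx k).ne'
    exact mul_left_cancel₀ h3 h1
  have left : ∀ᶠ x in 𝓝[<] (0 : ℝ), F1 x = -V x := by
    filter_upwards [main.filter_mono nhdsWithin_le_nhds, self_mem_nhdsWithin] with x h1 h2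
    have hx : x < 0 := h2
    rw [hs1, Real.rpow_one, abs_of_neg hx, mul_neg, ← pow_succ, ← hkn, Complex.ofReal_neg,
      neg_mul, ← mul_neg] at h1
    have h3 : ((x ^ k : ℝ) : ℂ) ≠ 0 := by exact_mod_cast (pow_ne_zero k hx.ne)
    exact mul_left_cancel₀ h3 h1
  have r1 : F1 0 = V 0 := tendsto_nhds_unique
    ((hF1.continuousAt.tendsto.mono_left nhdsWithin_le_nhds).congr' right)
    (hV.tendsto.mono_left nhdsWithin_le_nhds)
  have r2 : F1 0 = -V 0 := tendsto_nhds_unique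
    ((hF1.continuousAt.tendsto.mono_left nhdsWithin_le_nhds).congr' left)
    (hV.neg.tendsto.mono_left nhdsWithin_le_nhds)
  have : V 0 = 0 := by
    rw [r1] at r2
    exact self_eq_neg.1 r2
  exact hV0 this

lemma liouville_inj {d : ℕ} : ∃ w : Fin d → ℝ, (∀ i : Fin d, i.val = 0 → w i = 1) ∧
    Function.Injective (fun j : Fin d → ℤ => ∑ i, (j i : ℝ) * w i) := by
  have hL : Transcendental ℤ (liouvilleNumber ((2 : ℕ) : ℝ)) := transcendental_liouvilleNumber le_rfl
  set L := liouvilleNumber ((2 : ℕ) : ℝ)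
  refine ⟨fun i => L ^ i.val, fun i hi => by simp [hi], fun a b hab => ?_⟩
  rw [transcendental_iff] at hL
  have := hL (∑ i : Fin d, Polynomial.C (a i - b i) * Polynomial.X ^ i.val) (by
    simp only at hab
    simp only [map_sum, map_mul, Polynomial.aeval_C, Polynomial.aeval_X, map_pow]
    simp [sub_mul, Finset.sum_sub_distrib, hab])
  funext i
  have h2 := congrArg (fun p => p.coeff i.val) this
  simp only [Polynomial.finsetSum_coeff, Polynomial.coeff_C_mul_X_pow, Polynomial.coeff_zero] at h2
  rw [Finset.sum_eq_single i] at h2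
  · simp at h2
    linarith
  · intro b _ hb
    rw [if_neg]
    intro h
    exact hb (Fin.ext h.symm)
  · simp

/-- Exponential characters on the line. -/
noncomputable def expHom (a : ℝ) : Multiplicative ℝ →* ℂ where
  toFun x := Complex.exp (Complex.I * ((x.toAdd * a : ℝ) : ℂ))
  map_one' := by simp
  map_mul' x y := by
    rw [← Complex.exp_add]
    congr 1
    simp only [toAdd_mul]
    push_cast
    ring

lemma expHom_inj : Function.Injective expHom := by
  intro a b hab
  by_contra hne
  have h0 : a - b ≠ 0 := sub_ne_zero.2 hne
  have h1 := DFunLike.congr_fun hab (Multiplicative.ofAdd (Real.pi / (a - b)))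
  simp only [expHom, MonoidHom.coe_mk, OneHom.coe_mk, toAdd_ofAdd] at h1
  have e : Complex.I * ((Real.pi / (a - b) * a : ℝ) : ℂ) =
      Complex.I * ((Real.pi / (a - b) * b : ℝ) : ℂ) + Real.pi * Complex.I := by
    have : Real.pi / (a - b) * a = Real.pi / (a - b) * b + Real.pi := by field_simp; ring
    rw [this]
    push_cast
    ring
  rw [e, Complex.exp_add, Complex.exp_pi_mul_I] at h1
  have h2 := Complex.exp_ne_zero (Complex.I * ((Real.pi / (a - b) * b : ℝ) : ℂ))
  rw [mul_neg_one] at h1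
  exact h2 (self_eq_neg.1 h1.symm)

lemma exp_indep {ι : Type} (S : Finset ι) (a : ι → ℝ) (ha : Function.Injective a) (c : ι → ℂ)
    (h : ∀ x : ℝ, ∑ j ∈ S, c j * Complex.exp (Complex.I * ((x * a j : ℝ) : ℂ)) = 0) :
    ∀ j ∈ S, c j = 0 := by
  have li := (linearIndependent_monoidHom (Multiplicative ℝ) ℂ).comp (fun j => expHom (a j))
    (expHom_inj.comp ha)
  refine linearIndependent_iff'.1 li S c ?_
  funext x
  rw [Finset.sum_apply]
  exact h x.toAdd

lemma fourier_id {d : ℕ} {h s : ℝ} (hs : s ∈ Set.Ioo (0 : ℝ) 1) (u : (Fin d → ℤ) → ℝ)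
    (S : Finset (Fin d → ℤ)) (hu : ∀ j, j ∉ S → u j = 0) (hf : ∀ j, j ∉ S → fracLap d h s u j = 0)
    (θ : Fin d → ℝ) :
    ∑ j ∈ S, (fracLap d h s u j : ℂ) * chi θ j =
      (∑ j ∈ S, (u j : ℂ) * chi θ j) * ((cc h s * mconst s * (lam θ) ^ s : ℝ) : ℂ) := by
  have hK := Ksh_summable (d := d) (h := h) hs
  have hfe : ∀ j, fracLap d h s u j =
      u j * (∑' m : Fin d → ℤ, Ksh d h s m) - ∑ m ∈ S, u m * Ksh d h s (j - m) := by
    intro j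
    have h1 : HasSum (fun m => u j * Ksh d h s (j - m)) (u j * (∑' m : Fin d → ℤ, Ksh d h s m)) :=
      (((Equiv.subLeft j).hasSum_iff (f := fun m => Ksh d h s m)).2 hK.hasSum).mul_left _
    have h2 : HasSum (fun m => u m * Ksh d h s (j - m)) (∑ m ∈ S, u m * Ksh d h s (j - m)) :=
      hasSum_sum_of_ne_finset_zero fun m hm => by rw [hu m hm, zero_mul]
    have h3 := h1.sub h2
    unfold fracLap
    rw [← h3.tsum_eq]
    congr 1
    funext m
    ring
  have hKs := Ksh_hasSum (d := d) (h := h) hs θ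
  set Kh := ∑' m : Fin d → ℤ, ((Ksh d h s m : ℝ) : ℂ) * chi θ m with hKh
  have hKs' : HasSum (fun m : Fin d → ℤ => ((Ksh d h s m : ℝ) : ℂ) * chi θ m) Kh :=
    hKs.summable.hasSum
  have hshift : ∀ m : Fin d → ℤ, HasSum (fun j => ((u m * Ksh d h s (j - m) : ℝ) : ℂ) * chi θ j)
      ((u m : ℂ) * chi θ m * Kh) := by
    intro m
    have h1 := ((Equiv.subRight m).hasSum_iff
      (f := fun m => ((Ksh d h s m : ℝ) : ℂ) * chi θ m)).2 hKs'
    have h2 := hasSum_mul_left_aux ((u m : ℂ) * chi θ m) h1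
    convert h2 using 1
    funext j
    have : chi θ j = chi θ m * chi θ (j - m) := by rw [← chi_add, add_sub_cancel]
    simp only [Function.comp, Equiv.subRight_apply]
    rw [this]
    push_cast
    ring
  have hsum := hasSum_sum (s := S) fun m _ => hshift m
  have hA : HasSum (fun j => ((u j * (∑' m : Fin d → ℤ, Ksh d h s m) : ℝ) : ℂ) * chi θ j)
      (∑ j ∈ S, ((u j * (∑' m : Fin d → ℤ, Ksh d h s m) : ℝ) : ℂ) * chi θ j) :=
    hasSum_sum_of_ne_finset_zero fun m hm => by rw [hu m hm, zero_mul]; simp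
  have hB : HasSum (fun j => (fracLap d h s u j : ℂ) * chi θ j)
      (∑ j ∈ S, (fracLap d h s u j : ℂ) * chi θ j) :=
    hasSum_sum_of_ne_finset_zero fun m hm => by rw [hf m hm]; simp
  have hD := hA.sub hsum
  have hE : (fun j => (fracLap d h s u j : ℂ) * chi θ j) = fun j =>
      ((u j * (∑' m : Fin d → ℤ, Ksh d h s m) : ℝ) : ℂ) * chi θ j -
        ∑ m ∈ S, ((u m * Ksh d h s (j - m) : ℝ) : ℂ) * chi θ j := by
    funext j
    rw [hfe j, Complex.ofReal_sub, sub_mul, Complex.ofReal_sum, Finset.sum_mul]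
  have hfin := hB.unique (hE ▸ hD)
  rw [hfin, ← symbol_eq hs θ, ← hKh, mul_sub, Finset.sum_mul, Finset.sum_mul]
  congr 1
  refine Finset.sum_congr rfl fun j _ => ?_
  rw [Complex.ofReal_mul]
  ring

lemma lam_line {d : ℕ} (w : Fin d → ℝ) (x : ℝ) :
    lam (fun i => x * w i) = x ^ 2 * ∑ i, (w i * Real.sinc (x * w i / 2)) ^ 2 := by
  unfold lam
  rw [Finset.mul_sum]
  refine Finset.sum_congr rfl fun i _ => ?_
  have h1 : Real.cos (x * w i) = 1 - 2 * Real.sin (x * w i / 2) ^ 2 := by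
    have := Real.cos_two_mul (x * w i / 2)
    rw [mul_div_cancel₀ _ (two_ne_zero)] at this
    rw [this, Real.cos_sq']
    ring
  have h2 : Real.sin (x * w i / 2) = x * w i / 2 * Real.sinc (x * w i / 2) := by
    by_cases h0 : x * w i / 2 = 0
    · rw [h0]; simp
    · rw [Real.sinc_of_ne_zero h0, mul_div_cancel₀ _ h0]
  rw [h1, h2]
  ring

lemma support_finite {d : ℕ} {h R : ℝ} (hh : 0 < h) :
    {j : Fin d → ℤ | Real.sqrt (∑ i, (h * (j i : ℝ)) ^ 2) < R}.Finite := by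
  obtain ⟨N, hN⟩ := exists_nat_gt (R / h)
  refine (Set.Finite.pi' (fun _ : Fin d => Set.finite_Icc (-(N : ℤ)) N)).subset fun j hj i => ?_
  have h1 : |h * (j i : ℝ)| ≤ Real.sqrt (∑ i, (h * (j i : ℝ)) ^ 2) := by
    apply Real.abs_le_sqrt
    exact Finset.single_le_sum (f := fun i => (h * (j i : ℝ)) ^ 2)
      (fun i _ => sq_nonneg _) (Finset.mem_univ i)
  have h2 : |h * (j i : ℝ)| < R := lt_of_le_of_lt h1 hj
  rw [abs_mul, abs_of_pos hh] at h2
  have h3 : |(j i : ℝ)| < N := by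
    refine lt_trans ?_ hN
    rw [lt_div_iff₀ hh]
    linarith
  rw [abs_lt] at h3
  have h4 : -(N : ℤ) < j i := by exact_mod_cast h3.1
  have h5 : j i < (N : ℤ) := by exact_mod_cast h3.2
  exact ⟨h4.le, h5.le⟩

lemma line_analytic {d : ℕ} (S : Finset (Fin d → ℤ)) (c : (Fin d → ℤ) → ℂ) (w : Fin d → ℝ) :
    AnalyticOnNhd ℝ (fun x : ℝ => ∑ j ∈ S, c j * chi (fun i => x * w i) j) Set.univ := by
  intro x _
  unfold chi
  have hof : ∀ y, AnalyticAt ℝ (fun x : ℝ => (x : ℂ)) y := fun y => Complex.ofRealCLM.analyticAt y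
  refine Finset.analyticAt_fun_sum _ fun j _ => analyticAt_const.mul ?_
  have : AnalyticAt ℝ (fun x : ℝ => Complex.I * ((x : ℂ) * ((∑ i, (j i : ℝ) * w i : ℝ) : ℂ))) x :=
    analyticAt_const.mul ((hof x).mul analyticAt_const)
  have h2 : AnalyticAt ℝ (fun x : ℝ => Complex.exp
      (Complex.I * ((x : ℂ) * ((∑ i, (j i : ℝ) * w i : ℝ) : ℂ)))) x :=
    AnalyticAt.fun_comp (g := Complex.exp) ((analyticAt_cexp).restrictScalars) this
  have h3 : (fun x : ℝ => Complex.exp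
      (Complex.I * ((∑ i, (j i : ℝ) * (fun i => x * w i) i : ℝ) : ℂ))) = fun x : ℝ => Complex.exp
      (Complex.I * ((x : ℂ) * ((∑ i, (j i : ℝ) * w i : ℝ) : ℂ))) := by
    funext y
    rw [← Complex.ofReal_mul, Finset.mul_sum]
    congr 3
    refine Finset.sum_congr rfl fun i _ => ?_
    ring
  rw [h3]
  exact h2

/-- Global unique continuation from the exterior: if `u` and `(-Δ_d)^s u`
both vanish at all lattice points `hj` with `|hj| ≥ R` (where `R ≥ h`), then `u ≡ 0`. -/
theorem exterior_global_UCP (d : ℕ) (hd : 1 ≤ d) (h s R : ℝ) (hh : 0 < h)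
    (hs : s ∈ Set.Ioo (0 : ℝ) 1) (hR : h ≤ R) (u : (Fin d → ℤ) → ℝ)
    (hvan : ∀ j : Fin d → ℤ, R ≤ Real.sqrt (∑ i, (h * (j i : ℝ)) ^ 2) →
      u j = 0 ∧ fracLap d h s u j = 0) :
    ∀ j : Fin d → ℤ, u j = 0 := by
  set S := (support_finite (d := d) (R := R) hh).toFinset with hS
  have hout : ∀ j, j ∉ S → u j = 0 ∧ fracLap d h s u j = 0 := by
    intro j hj
    apply hvan
    simpa [hS] using hj
  obtain ⟨w, hw0, hwinj⟩ := liouville_inj (d := d)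
  have hid := fun x : ℝ => fourier_id hs u S (fun j hj => (hout j hj).1)
    (fun j hj => (hout j hj).2) (fun i => x * w i)
  simp only [lam_line] at hid
  have hUa := line_analytic S (fun j => (u j : ℂ)) w
  have hFa := line_analytic S (fun j => (fracLap d h s u j : ℂ)) w
  have hgc : Continuous (fun x : ℝ => ∑ i, (w i * Real.sinc (x * w i / 2)) ^ 2) := by
    have := Real.continuous_sinc
    fun_prop
  have hg0 : 0 < ∑ i, (w i * Real.sinc (0 * w i / 2)) ^ 2 := by
    refine Finset.sum_pos' (fun i _ => sq_nonneg _) ⟨⟨0, hd⟩, Finset.mem_univ _, ?_⟩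
    rw [hw0 _ rfl]
    simp
  have hev := anal_contra (hUa 0 trivial) (hFa 0 trivial) hgc.continuousAt hg0 hs
    (mul_pos (cc_pos hh hs) (mconst_pos hs)) hid
  have hzero : (fun x : ℝ => ∑ j ∈ S, (u j : ℂ) * chi (fun i => x * w i) j) = fun _ => 0 :=
    hUa.eq_of_eventuallyEq analyticOnNhd_const hev
  have hc := exp_indep S _ hwinj (fun j => (u j : ℂ)) (fun x => by
    have := congrFun hzero x
    simp only [chi] at this
    rw [← this]
    refine Finset.sum_congr rfl fun j _ => ?_
    congr 3
    rw [Finset.mul_sum]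
    push_cast
    refine Finset.sum_congr rfl fun i _ => ?_
    ring)
  intro j
  by_cases hj : j ∈ S
  · exact_mod_cast hc j hj
  · exact (hout j hj).1
end

section
/- Unique continuation from a half-space: Let d ≥ 1, h > 0, s ∈ (0,1), and let u : ℤ^d → ℝ be square-summable, i.e. Σ_{j∈ℤ^d} |u_j|² < ∞ (note every square-summable u lies in ℓ_s, so (−Δ_d)^s u is defined). If u_j = 0 and (−Δ_d)^s u_j = 0 for every j = (j_1,…,j_d) ∈ ℤ^d with j_d ≥ 0, then u ≡ 0 on ℤ^d. -/
open scoped BigOperators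
open MeasureTheory

set_option linter.unusedSectionVars false
set_option linter.unnecessarySeqFocus false

namespace UCP

/-- Terms of the Bessel series. -/
noncomputable def bterm (t : ℝ) (k : ℤ) (l : ℕ) : ℝ :=
  t ^ (2 * l + k.natAbs) / ((l.factorial : ℝ) * ((l + k.natAbs).factorial : ℝ))

lemma besselI_eq (k : ℤ) (t : ℝ) : besselI k (2 * t) = ∑' l, bterm t k l := by
  unfold besselI bterm
  congr 1
  ext l
  have h1 : 2 * t / 2 = t := by ring
  have h2 : ((l : ℝ) + (k.natAbs : ℝ) + 1) = ((l + k.natAbs : ℕ) : ℝ) + 1 := by push_cast; ring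
  rw [h1, h2, Real.Gamma_nat_eq_factorial]

/-- Pairs of naturals indexed by difference and minimum. -/
def pairEquiv : ℤ × ℕ ≃ ℕ × ℕ where
  toFun p := (p.2 + p.1.toNat, p.2 + (-p.1).toNat)
  invFun q := ((q.1 : ℤ) - q.2, min q.1 q.2)
  left_inv := by
    rintro ⟨k, l⟩
    ext <;> simp <;> omega
  right_inv := by
    rintro ⟨a, b⟩
    ext <;> simp <;> omega

section ring
variable {R : Type*} [NormedRing R] [NormedAlgebra ℝ R] [CompleteSpace R]

lemma hasSum_mul_norm {α β : Type*} {f : α → R} {g : β → R} {a b : R} (hf : HasSum f a)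
    (hg : HasSum g b) (hfn : Summable fun x => ‖f x‖) (hgn : Summable fun x => ‖g x‖) :
    HasSum (fun x : α × β => f x.1 * g x.2) (a * b) := by
  have h := summable_mul_of_summable_norm hfn hgn
  have e := tsum_mul_tsum_of_summable_norm hfn hgn
  rw [hf.tsum_eq, hg.tsum_eq] at e
  rw [e]
  exact h.hasSum

lemma exp_mul_hasSum (t : ℝ) (x y : R) :
    HasSum (fun q : ℕ × ℕ => (((q.1.factorial : ℝ)⁻¹ • (t • x) ^ q.1) *
      ((q.2.factorial : ℝ)⁻¹ • (t • y) ^ q.2)))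
      (NormedSpace.exp (t • x) * NormedSpace.exp (t • y)) :=
  hasSum_mul_norm (f := fun n : ℕ => (n.factorial : ℝ)⁻¹ • (t • x) ^ n)
    (g := fun n : ℕ => (n.factorial : ℝ)⁻¹ • (t • y) ^ n)
    (NormedSpace.exp_series_hasSum_exp' (𝕂 := ℝ) (t • x))
    (NormedSpace.exp_series_hasSum_exp' (𝕂 := ℝ) (t • y))
    (NormedSpace.norm_expSeries_summable' (𝕂 := ℝ) (t • x))
      (NormedSpace.norm_expSeries_summable' (𝕂 := ℝ) (t • y))

lemma unit_pow (x : Rˣ) (k : ℤ) (l : ℕ) :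
    (x : R) ^ (l + k.toNat) * ((x⁻¹ : Rˣ) : R) ^ (l + (-k).toNat) = ((x ^ k : Rˣ) : R) := by
  rw [← Units.val_pow_eq_pow_val, ← Units.val_pow_eq_pow_val, ← Units.val_mul]
  congr 1
  rw [← zpow_natCast, ← zpow_natCast, inv_zpow', ← zpow_add]
  congr 1
  push_cast
  omega

lemma fact_pair (k : ℤ) (l : ℕ) :
    (((l + k.toNat).factorial : ℝ)) * ((l + (-k).toNat).factorial : ℝ)
      = (l.factorial : ℝ) * ((l + k.natAbs).factorial : ℝ) := by
  rcases le_total 0 k with h | h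
  · have h1 : k.toNat = k.natAbs := by omega
    have h2 : (-k).toNat = 0 := by omega
    rw [h1, h2, add_zero, mul_comm]
  · have h1 : (-k).toNat = k.natAbs := by omega
    have h2 : k.toNat = 0 := by omega
    rw [h1, h2, add_zero]

lemma bterm_hasSum2 (t : ℝ) (x : Rˣ) :
    HasSum (fun p : ℤ × ℕ => bterm t p.1 p.2 • ((x ^ p.1 : Rˣ) : R))
      (NormedSpace.exp (t • (x : R)) * NormedSpace.exp (t • ((x⁻¹ : Rˣ) : R))) := by
  have h := (pairEquiv.hasSum_iff).2 (exp_mul_hasSum t (x : R) ((x⁻¹ : Rˣ) : R))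
  convert h using 1
  ext ⟨k, l⟩
  simp only [Function.comp, pairEquiv, Equiv.coe_fn_mk, smul_pow, smul_smul, smul_mul_smul_comm,
    unit_pow]
  congr 1
  rw [bterm, ← fact_pair]
  have : 2 * l + k.natAbs = (l + k.toNat) + (l + (-k).toNat) := by omega
  rw [this, pow_add]
  field_simp

lemma bterm_summable (t : ℝ) (k : ℤ) : Summable (bterm t k) := by
  have h := (bterm_hasSum2 (R := ℝ) t 1).summable.prod_factor k
  simpa using h

lemma bessel_hasSum (t : ℝ) (x : Rˣ) :
    HasSum (fun k : ℤ => besselI k (2 * t) • ((x ^ k : Rˣ) : R))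
      (NormedSpace.exp (t • (x : R) + t • ((x⁻¹ : Rˣ) : R))) := by
  let _ := NormedAlgebra.restrictScalars ℚ ℝ R
  rw [NormedSpace.exp_add_of_commute]
  · refine HasSum.prod_fiberwise (bterm_hasSum2 t x) fun k => ?_
    rw [besselI_eq]
    exact (bterm_summable t k).hasSum.smul_const _
  · refine Commute.smul_left (Commute.smul_right ?_ _) _
    simp [Commute, SemiconjBy]

lemma besselI_nonneg {t : ℝ} (ht : 0 ≤ t) (k : ℤ) : 0 ≤ besselI k (2 * t) := by
  rw [besselI_eq]
  exact tsum_nonneg fun l => by unfold bterm; positivity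

lemma besselI_zero_ge {t : ℝ} (ht : 0 ≤ t) : 1 ≤ besselI 0 (2 * t) := by
  rw [besselI_eq]
  have := (bterm_summable t 0).le_tsum 0 (fun l _ => by unfold bterm; positivity)
  simpa [bterm] using this

lemma besselI_measurable (k : ℤ) : Measurable fun t : ℝ => besselI k (2 * t) := by
  refine measurable_of_tendsto_metrizable (f := fun n t => ∑ l ∈ Finset.range n, bterm t k l)
    (fun n => ?_) ?_
  · unfold bterm
    fun_prop
  · rw [tendsto_pi_nhds]
    intro t
    rw [besselI_eq]
    exact (bterm_summable t k).hasSum.tendsto_sum_nat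

lemma bessel_summable (t : ℝ) : Summable fun k : ℤ => besselI k (2 * t) := by
  simpa using (bessel_hasSum (R := ℝ) t 1).summable

lemma prod_summable {t : ℝ} (ht : 0 ≤ t) : ∀ n : ℕ,
    Summable fun m : Fin n → ℤ => ∏ i, besselI (m i) (2 * t)
  | 0 => (hasSum_fintype _).summable
  | n + 1 => by
    rw [← (Fin.consEquiv (fun _ : Fin (n+1) => ℤ)).summable_iff]
    have := summable_mul_of_summable_norm (bessel_summable t).norm (prod_summable ht n).norm
    refine this.congr ?_
    rintro ⟨k, m⟩
    simp [Fin.consEquiv, Fin.prod_univ_succ]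

/-- Multidimensional generating function. -/
lemma multi_hasSum {V : Type*} [AddCommGroup V] (S : V → R) (S0 : S 0 = 1)
    (Sadd : ∀ a b, S (a + b) = S a * S b) (Sn : ∀ a, ‖S a‖ ≤ 1) {t : ℝ} (ht : 0 ≤ t) :
    ∀ (n : ℕ) (f : Fin n → V),
    HasSum (fun m : Fin n → ℤ => (∏ i, besselI (m i) (2 * t)) • S (∑ i, m i • f i))
      (NormedSpace.exp (t • ∑ i, (S (f i) + S (-f i))))
  | 0, f => by
    let _ := NormedAlgebra.restrictScalars ℚ ℝ R
    simp [S0]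
  | n + 1, f => by
    let _ := NormedAlgebra.restrictScalars ℚ ℝ R
    have comm : ∀ a b, Commute (S a) (S b) := fun a b => by
      rw [Commute, SemiconjBy, ← Sadd, ← Sadd, add_comm]
    have hinv : ∀ a, S a * S (-a) = 1 := fun a => by rw [← Sadd, add_neg_cancel, S0]
    have hinv' : ∀ a, S (-a) * S a = 1 := fun a => by rw [← Sadd, neg_add_cancel, S0]
    let x : Rˣ := ⟨S (f 0), S (-f 0), hinv _, hinv' _⟩
    have hpow : ∀ k : ℤ, ((x ^ k : Rˣ) : R) = S (k • f 0) := by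
      let φ : Multiplicative V →* R :=
        { toFun := fun a => S a.toAdd, map_one' := S0, map_mul' := fun a b => Sadd _ _ }
      intro k
      have hx : x = Units.map φ (toUnits (Multiplicative.ofAdd (f 0))) := by
        ext; rfl
      rw [hx, ← map_zpow, ← map_zpow]
      rfl
    have h1 := bessel_hasSum t x
    simp only [hpow] at h1
    have h2 := multi_hasSum S S0 Sadd Sn ht n (fun i => f i.succ)
    have b1 : Summable fun k : ℤ => ‖besselI k (2 * t) • S (k • f 0)‖ := by
      refine Summable.of_nonneg_of_le (fun _ => norm_nonneg _) (fun k => ?_)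
        (bessel_summable t).norm
      rw [norm_smul]
      exact mul_le_of_le_one_right (norm_nonneg _) (Sn _)
    have b2 : Summable fun m : Fin n → ℤ =>
        ‖(∏ i, besselI (m i) (2 * t)) • S (∑ i, m i • f i.succ)‖ := by
      refine Summable.of_nonneg_of_le (fun _ => norm_nonneg _) (fun k => ?_)
        (prod_summable ht n).norm
      rw [norm_smul]
      exact mul_le_of_le_one_right (norm_nonneg _) (Sn _)
    have h3 := hasSum_mul_norm h1 h2 b1 b2
    rw [← (Fin.consEquiv (fun _ : Fin (n+1) => ℤ)).hasSum_iff]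
    convert h3 using 1
    · ext ⟨k, m⟩
      simp [Fin.consEquiv, Fin.prod_univ_succ, Fin.sum_univ_succ, Sadd, mul_smul]
      exact smul_comm _ _ _
    · rw [← NormedSpace.exp_add_of_commute]
      · rw [Fin.sum_univ_succ, smul_add, smul_add]
        rfl
      · refine Commute.add_left ?_ ?_ <;> refine Commute.smul_left (Commute.smul_right ?_ _) _ <;>
          refine Commute.sum_right _ _ _ fun i _ => Commute.add_right (comm _ _) (comm _ _)

end ring

/-- The heat kernel expansion of the semigroup. -/
lemma heat_hasSum {R : Type*} [NormedRing R] [NormedAlgebra ℝ R] [CompleteSpace R]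
    {d : ℕ} (S : (Fin d → ℤ) → R) (S0 : S 0 = 1)
    (Sadd : ∀ a b, S (a + b) = S a * S b) (Sn : ∀ a, ‖S a‖ ≤ 1) {t : ℝ} (ht : 0 ≤ t) :
    HasSum (fun m : Fin d → ℤ => heatG d m t • S m)
      (Real.exp (-(2 * (d : ℝ) * t)) •
        NormedSpace.exp (t • ∑ i, (S (Pi.single i 1) + S (-Pi.single i 1)))) := by
  have h := (multi_hasSum S S0 Sadd Sn ht d (fun i => Pi.single i 1)).const_smul
    (Real.exp (-(2 * (d : ℝ) * t)))
  convert h using 1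
  ext m
  rw [heatG, mul_smul]
  congr 3
  ext j
  simp [Finset.sum_apply, Pi.single_apply]

lemma heat_hasSum_one {d : ℕ} {t : ℝ} (ht : 0 ≤ t) :
    HasSum (fun m : Fin d → ℤ => heatG d m t) 1 := by
  have h := heat_hasSum (R := ℝ) (d := d) (fun _ => 1) rfl (by simp) (by simp) ht
  have e : Real.exp (-(2 * (d : ℝ) * t)) • NormedSpace.exp (t • ∑ _i : Fin d, ((1 : ℝ) + 1)) = 1 := by
    rw [← Real.exp_eq_exp_ℝ]
    simp only [Finset.sum_const, Finset.card_univ, Fintype.card_fin, smul_eq_mul,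
      nsmul_eq_mul, ← Real.exp_add]
    rw [Real.exp_eq_one_iff]
    ring
  rw [e] at h
  simpa using h

lemma heat_nonneg {d : ℕ} {t : ℝ} (ht : 0 ≤ t) (m : Fin d → ℤ) : 0 ≤ heatG d m t :=
  mul_nonneg (Real.exp_pos _).le (Finset.prod_nonneg fun _ _ => besselI_nonneg ht _)

lemma heat_measurable {d : ℕ} (m : Fin d → ℤ) : Measurable (heatG d m) := by
  unfold heatG
  refine Measurable.mul (by fun_prop) ?_
  exact Finset.measurable_fun_prod _ fun i _ => besselI_measurable (m i)

lemma heat_zero_ge {d : ℕ} {t : ℝ} (ht : 0 ≤ t) : 1 - 2 * d * t ≤ heatG d 0 t := by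
  have h1 : 1 ≤ ∏ i : Fin d, besselI ((0 : Fin d → ℤ) i) (2 * t) := by
    have := Finset.prod_le_prod (s := Finset.univ) (f := fun _ : Fin d => (1 : ℝ))
      (g := fun i => besselI ((0 : Fin d → ℤ) i) (2 * t)) (fun _ _ => zero_le_one)
      (fun i _ => besselI_zero_ge ht)
    simpa using this
  have h2 := Real.add_one_le_exp (-(2 * (d : ℝ) * t))
  have h3 := Real.exp_pos (-(2 * (d : ℝ) * t))
  unfold heatG
  nlinarith

/-- Off-diagonal mass of the heat kernel. -/
lemma heat_sum_le {d : ℕ} (hd : 1 ≤ d) {t : ℝ} (ht : 0 ≤ t) (F : Finset (Fin d → ℤ)) (hF : (0 : Fin d → ℤ) ∉ F) :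
    ∑ m ∈ F, heatG d m t ≤ 2 * d * min 1 t := by
  have h := (heat_hasSum_one (d := d) ht)
  have h1 := sum_le_hasSum (insert 0 F) (fun m _ => heat_nonneg ht m) h
  rw [Finset.sum_insert hF] at h1
  have h2 := heat_zero_ge (d := d) ht
  have h3 := heat_nonneg (d := d) ht 0
  have hd' : (1 : ℝ) ≤ d := by exact_mod_cast hd
  rcases le_total 1 t with h4 | h4
  · rw [min_eq_left h4]; linarith
  · rw [min_eq_right h4]; linarith

/-- Square-summable sequences. -/
abbrev L2 (d : ℕ) := lp (fun _ : Fin d → ℤ => ℝ) 2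

variable {d : ℕ}

lemma memlp_iff (f : (Fin d → ℤ) → ℝ) :
    Memℓp (E := fun _ : Fin d → ℤ => ℝ) f 2 ↔ Summable fun j => f j ^ 2 := by
  rw [memℓp_gen_iff (by norm_num)]
  simp

lemma L2_summable (x : L2 d) : Summable fun j => x j ^ 2 := (memlp_iff _).1 x.2

lemma inner_hasSum (x y : L2 d) : HasSum (fun j => x j * y j) (inner ℝ x y) := by
  have := lp.hasSum_inner (𝕜 := ℝ) x y
  simpa [mul_comm] using this

lemma inner_tsum (x y : L2 d) : inner ℝ x y = ∑' j, x j * y j := (inner_hasSum x y).tsum_eq.symm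

/-- Composition with a permutation, as a linear map. -/
def compL (e : (Fin d → ℤ) ≃ (Fin d → ℤ)) : L2 d →ₗ[ℝ] L2 d where
  toFun x := ⟨fun j => x (e j), (memlp_iff _).2 ((L2_summable x).comp_injective e.injective)⟩
  map_add' x y := by ext; rfl
  map_smul' c x := by ext; rfl

lemma norm_sq_tsum (x : L2 d) : ‖x‖ ^ 2 = ∑' j, x j ^ 2 := by
  rw [← real_inner_self_eq_norm_sq, inner_tsum]
  simp [pow_two]

lemma compL_norm (e : (Fin d → ℤ) ≃ (Fin d → ℤ)) (x : L2 d) : ‖compL e x‖ = ‖x‖ := by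
  have : ‖compL e x‖ ^ 2 = ‖x‖ ^ 2 := by
    rw [norm_sq_tsum, norm_sq_tsum]
    exact e.tsum_eq (fun j => x j ^ 2)
  exact (sq_eq_sq₀ (norm_nonneg _) (norm_nonneg _)).1 this

/-- Composition with a permutation. -/
noncomputable def comp (e : (Fin d → ℤ) ≃ (Fin d → ℤ)) : L2 d →L[ℝ] L2 d :=
  LinearIsometry.toContinuousLinearMap ⟨compL e, compL_norm e⟩

@[simp] lemma comp_apply (e : (Fin d → ℤ) ≃ (Fin d → ℤ)) (x : L2 d) (j : Fin d → ℤ) :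
    comp e x j = x (e j) := rfl

lemma comp_norm (e : (Fin d → ℤ) ≃ (Fin d → ℤ)) (x : L2 d) : ‖comp e x‖ = ‖x‖ := compL_norm e x

lemma inner_comp (e : (Fin d → ℤ) ≃ (Fin d → ℤ)) (x y : L2 d) :
    inner ℝ (comp e x) y = inner ℝ x (comp e.symm y) := by
  rw [inner_tsum, inner_tsum, ← e.tsum_eq (fun j => x j * comp e.symm y j)]
  simp

/-- Translation. -/
noncomputable def Sh (a : Fin d → ℤ) : L2 d →L[ℝ] L2 d := comp (Equiv.subRight a)

@[simp] lemma Sh_apply (a : Fin d → ℤ) (x : L2 d) (j : Fin d → ℤ) :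
    Sh a x j = x (j - a) := rfl

lemma Sh_norm (a : Fin d → ℤ) (x : L2 d) : ‖Sh a x‖ = ‖x‖ := comp_norm _ x

lemma Sh_zero : Sh (0 : Fin d → ℤ) = 1 := by
  ext x j; simp

lemma Sh_add (a b : Fin d → ℤ) : Sh (a + b) = Sh a * Sh b := by
  ext x j; simp [sub_sub]

lemma Sh_opNorm (a : Fin d → ℤ) : ‖Sh a‖ ≤ 1 :=
  ContinuousLinearMap.opNorm_le_bound _ zero_le_one fun x => by rw [Sh_norm, one_mul]

lemma inner_Sh (a : Fin d → ℤ) (x y : L2 d) :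
    inner ℝ (Sh a x) y = inner ℝ x (Sh (-a) y) := by
  rw [Sh, inner_comp]
  congr 1
  ext j
  simp

open Classical in
/-- Restriction to a set. -/
noncomputable def mask (s : Set (Fin d → ℤ)) (x : L2 d) : L2 d :=
  ⟨fun j => if j ∈ s then x j else 0, (memlp_iff _).2 <|
    Summable.of_nonneg_of_le (fun _ => sq_nonneg _)
      (fun j => by split_ifs <;> simp [sq_nonneg]) (L2_summable x)⟩

open Classical in
@[simp] lemma mask_apply (s : Set (Fin d → ℤ)) (x : L2 d) (j : Fin d → ℤ) :
    mask s x j = if j ∈ s then x j else 0 := rfl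

lemma inner_mask (s : Set (Fin d → ℤ)) (x y : L2 d) :
    inner ℝ (mask s x) y = inner ℝ x (mask s y) := by
  rw [inner_tsum, inner_tsum]
  congr 1
  ext j
  simp only [mask_apply]
  split_ifs <;> simp

lemma mask_mask (s : Set (Fin d → ℤ)) (x : L2 d) : mask s (mask s x) = mask s x := by
  ext j
  simp only [mask_apply]
  split_ifs <;> rfl

lemma inner_mask_mask (s : Set (Fin d → ℤ)) (x y : L2 d) :
    inner ℝ (mask s x) (mask s y) = inner ℝ x (mask s y) := by
  rw [inner_mask, mask_mask]

lemma mask_norm_le (s : Set (Fin d → ℤ)) (x : L2 d) : ‖mask s x‖ ≤ ‖x‖ := by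
  have h : ‖mask s x‖ ^ 2 ≤ ‖mask s x‖ * ‖x‖ := by
    rw [← real_inner_self_eq_norm_sq, inner_mask, mask_mask, ← inner_mask]
    exact real_inner_le_norm _ _
  by_contra hc
  push Not at hc
  have : 0 ≤ ‖x‖ := norm_nonneg _
  nlinarith

lemma abs_apply_le (x : L2 d) (j : Fin d → ℤ) : |x j| ≤ ‖x‖ :=
  lp.norm_apply_le_norm (by norm_num) x j

/-- Sum of the nearest-neighbour translations. -/
noncomputable def X (d : ℕ) : L2 d →L[ℝ] L2 d :=
  ∑ i, (Sh (Pi.single i 1) + Sh (-Pi.single i 1))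

lemma X_opNorm : ‖X d‖ ≤ 2 * d := by
  unfold X
  refine (norm_sum_le _ _).trans ?_
  calc ∑ i : Fin d, ‖Sh (Pi.single i (1:ℤ)) + Sh (-Pi.single i (1:ℤ))‖ ≤ ∑ i : Fin d, (2 : ℝ) := by
        refine Finset.sum_le_sum fun i _ => (norm_add_le _ _).trans ?_
        linarith [Sh_opNorm (Pi.single i (1:ℤ)), Sh_opNorm (-Pi.single i (1:ℤ))]
    _ = 2 * d := by simp [mul_comm]

lemma inner_X (x y : L2 d) : inner ℝ y (X d x) =
    ∑ i, (inner ℝ y (Sh (Pi.single i 1) x) + inner ℝ y (Sh (-Pi.single i 1) x)) := by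
  simp [X, inner_sum, inner_add_right]

lemma X_apply (x : L2 d) (j : Fin d → ℤ) :
    X d x j = ∑ i, (x (j - Pi.single i 1) + x (j + Pi.single i 1)) := by
  have h : ∀ F : Finset (Fin d), (∑ i ∈ F, (Sh (Pi.single i (1:ℤ)) x + Sh (-Pi.single i (1:ℤ)) x)) j
     = ∑ i ∈ F, (x (j - Pi.single i 1) + x (j + Pi.single i 1)) := by
    intro F
    induction F using Finset.induction_on with
    | empty => simp
    | insert a F ha ih => 
      rw [Finset.sum_insert ha, Finset.sum_insert ha, ← ih]
      simp
  rw [← h]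
  simp [X]

lemma exists_resolvent {lam : ℝ} (hl : 0 < lam) (u : L2 d) :
    ∃ v : L2 d, (2 * d + lam) • v - X d v = u := by
  have h1 : ‖(1 : L2 d →L[ℝ] L2 d)‖ ≤ 1 := ContinuousLinearMap.norm_id_le
  have hx := X_opNorm (d := d)
  have h0 : (0:ℝ) ≤ d := by positivity
  have h : (2 * d + lam : ℝ) ∈ resolventSet ℝ (X d) := by
    apply spectrum.mem_resolventSet_of_norm_lt_mul
    rw [Real.norm_of_nonneg (by positivity)]
    nlinarith [norm_nonneg (X d), norm_nonneg (1 : L2 d →L[ℝ] L2 d)]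
  obtain ⟨w, hw⟩ := h
  refine ⟨(w⁻¹ : (L2 d →L[ℝ] L2 d)ˣ).val u, ?_⟩
  have h2 : w.val * (w⁻¹ : (L2 d →L[ℝ] L2 d)ˣ).val = 1 := by simp
  have h3 := congrArg (fun T : L2 d →L[ℝ] L2 d => T u) h2
  rw [hw] at h3
  simpa [Algebra.algebraMap_eq_smul_one] using h3

lemma resolvent_norm {lam : ℝ} (hl : 0 < lam) {u v : L2 d}
    (h : (2 * d + lam) • v - X d v = u) : lam * ‖v‖ ≤ ‖u‖ := by
  have h1 : ‖(2 * d + lam : ℝ) • v‖ ≤ ‖u‖ + ‖X d v‖ := by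
    rw [sub_eq_iff_eq_add.1 h]; exact norm_add_le _ _
  have h2 : ‖X d v‖ ≤ 2 * d * ‖v‖ := (X d).le_of_opNorm_le X_opNorm v
  have h0 : (0:ℝ) ≤ d := by positivity
  rw [norm_smul, Real.norm_of_nonneg (by positivity)] at h1
  linarith

/-- Reflection in the coordinate `l`. -/
def reflE (l : Fin d) : (Fin d → ℤ) ≃ (Fin d → ℤ) :=
  Function.Involutive.toPerm (fun p => Function.update p l (-1 - p l)) (fun p => by simp)

lemma reflE_apply (l : Fin d) (p : Fin d → ℤ) :
    reflE l p = Function.update p l (-1 - p l) := rfl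

/-- A slice of the lattice. -/
def slab (l : Fin d) (n : ℤ) : Set (Fin d → ℤ) := {p | p l = n}

/-- The half-space. -/
def half (l : Fin d) : Set (Fin d → ℤ) := {p | 0 ≤ p l}

lemma mask_slab_Sh (l : Fin d) (n : ℤ) (a : Fin d → ℤ) (x : L2 d) :
    mask (slab l n) (Sh a x) = Sh a (mask (slab l (n - a l)) x) := by
  ext j
  have : j ∈ slab l n ↔ j - a ∈ slab l (n - a l) := by simp [slab]
  by_cases hj : j ∈ slab l n
  · simp [hj, this.1 hj]
  · simp [hj, mt this.2 hj]

lemma mask_half_Sh (l : Fin d) (a : Fin d → ℤ) (ha : a l = 0) (x : L2 d) :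
    mask (half l) (Sh a x) = Sh a (mask (half l) x) := by
  ext j
  have : j ∈ half l ↔ j - a ∈ half l := by simp [half, ha]
  by_cases hj : j ∈ half l
  · simp [hj, this.1 hj]
  · simp [hj, mt this.2 hj]

lemma sum_split (l : Fin d) (f : Fin d → ℝ) (A B : ℝ) (hl : f l = A) (hne : ∀ i, i ≠ l → f i = B) :
    ∑ i, f i = d * B + (A - B) := by
  have : ∀ i, f i = B + if i = l then A - B else 0 := by
    intro i
    by_cases h : i = l
    · subst h; simp [hl]
    · simp [h, hne i h]
  simp_rw [this]
  simp [Finset.sum_add_distrib]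

lemma inner_slab_Sh_le (l : Fin d) (n : ℤ) (a : Fin d → ℤ) (v : L2 d) :
    inner ℝ (mask (slab l n) v) (Sh a v) ≤
      ‖mask (slab l n) v‖ * ‖mask (slab l (n - a l)) v‖ := by
  rw [inner_mask, ← inner_mask_mask, mask_slab_Sh]
  exact (real_inner_le_norm _ _).trans (by rw [Sh_norm])

lemma convexity (l : Fin d) {lam : ℝ} {u v : L2 d}
    (h : (2 * d + lam) • v - X d v = u) (hu : ∀ p ∈ half l, u p = 0) (n : ℤ) (hn : 0 ≤ n) :
    (2 + lam) * ‖mask (slab l n) v‖ ≤ ‖mask (slab l (n - 1)) v‖ + ‖mask (slab l (n + 1)) v‖ := by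
  set b : ℤ → ℝ := fun n => ‖mask (slab l n) v‖ with hb
  change (2 + lam) * b n ≤ b (n - 1) + b (n + 1)
  have b0 : ∀ n, 0 ≤ b n := fun n => norm_nonneg _
  have h1 : inner ℝ (mask (slab l n) v) u = 0 := by
    rw [inner_tsum]
    convert tsum_zero with j
    simp only [mask_apply]
    split_ifs with hj
    · rw [hu j (by simp only [slab, Set.mem_ofPred_eq] at hj; simp [half, hj, hn]), mul_zero]
    · simp
  have h2 : inner ℝ (mask (slab l n) v) v = b n ^ 2 := by
    rw [hb, ← real_inner_self_eq_norm_sq, inner_mask_mask, inner_mask]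
  have h3 : inner ℝ (mask (slab l n) v) (X d v) ≤ d * (2 * b n ^ 2) +
      (b n * (b (n - 1) + b (n + 1)) - 2 * b n ^ 2) := by
    rw [inner_X]
    have : ∀ i, inner ℝ (mask (slab l n) v) (Sh (Pi.single i 1) v) +
        inner ℝ (mask (slab l n) v) (Sh (-Pi.single i 1) v) ≤
        b n * b (n - (Pi.single i 1 : Fin d → ℤ) l) + b n * b (n - (-Pi.single i 1 : Fin d → ℤ) l) :=
      fun i => add_le_add (inner_slab_Sh_le l n _ v) (inner_slab_Sh_le l n _ v)
    refine (Finset.sum_le_sum fun i _ => this i).trans (le_of_eq ?_)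
    apply sum_split l
    · simp; ring
    · intro i hi
      simp [hi.symm]
      ring
  rw [← h, inner_sub_right, inner_smul_right, h2] at h1
  rcases (b0 n).eq_or_lt with h4 | h4
  · rw [← h4, mul_zero]; exact add_nonneg (b0 _) (b0 _)
  · have : b n * ((2 + lam) * b n) ≤ b n * (b (n - 1) + b (n + 1)) := by nlinarith
    exact le_of_mul_le_mul_left this h4

lemma strict_decrease {lam : ℝ} (hl : 0 < lam) (b : ℕ → ℝ) (b0 : ∀ n, 0 ≤ b n) (C : ℝ)
    (hC : ∀ n, b n ≤ C) (hconv : ∀ n, (2 + lam) * b (n + 1) ≤ b n + b (n + 2))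
    (h1 : 0 < b 1) : b 1 < b 0 := by
  by_contra hc
  push Not at hc
  have h : ∀ n, lam * b 1 ≤ b (n + 2) - b (n + 1) := by
    intro n
    induction n with
    | zero => have := hconv 0; simp at this ⊢; linarith
    | succ n ih =>
      have := hconv (n + 1)
      have h5 := mul_nonneg hl.le (b0 (n + 2))
      have e1 : n + 1 + 1 = n + 2 := rfl
      rw [e1] at *
      have e2 : n + 1 + 2 = n + 3 := rfl
      rw [e2] at *
      linarith
  have h' : ∀ n : ℕ, n * (lam * b 1) ≤ b (n + 1) := by
    intro n
    induction n with
    | zero => simpa using b0 1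
    | succ n ih => have := h n; push_cast; have e1 : n + 1 + 1 = n + 2 := rfl; rw [e1]; linarith
  obtain ⟨n, hn⟩ := exists_nat_gt (C / (lam * b 1))
  rw [div_lt_iff₀ (by positivity)] at hn
  linarith [h' n, hC (n + 1)]

lemma slab_compare (l : Fin d) {lam : ℝ} (hl : 0 < lam) {u v : L2 d}
    (h : (2 * d + lam) • v - X d v = u) (hu : ∀ p ∈ half l, u p = 0) :
    ‖mask (slab l 0) v‖ ≤ ‖mask (slab l (-1)) v‖ ∧
    (‖mask (slab l 0) v‖ = ‖mask (slab l (-1)) v‖ → ‖mask (slab l 0) v‖ = 0) := by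
  have key : 0 < ‖mask (slab l 0) v‖ → ‖mask (slab l 0) v‖ < ‖mask (slab l (-1)) v‖ := by
    intro hp
    have := strict_decrease hl (fun n : ℕ => ‖mask (slab l ((n : ℤ) - 1)) v‖)
      (fun _ => norm_nonneg _) ‖v‖ (fun _ => mask_norm_le _ _) (fun n => by
        have := convexity l h hu n (by positivity)
        convert this using 5 <;> push_cast <;> ring) (by simpa using hp)
    simpa using this
  rcases (norm_nonneg (mask (slab l 0) v)).eq_or_lt with h0 | h0
  · exact ⟨by rw [← h0]; exact norm_nonneg _, fun _ => h0.symm⟩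
  · exact ⟨(key h0).le, fun e => absurd e (key h0).ne⟩

lemma refl_Sh_ne (l : Fin d) (a : Fin d → ℤ) (ha : a l = 0) (x : L2 d) :
    comp (reflE l) (Sh a x) = Sh a (comp (reflE l) x) := by
  ext j
  simp only [comp_apply, Sh_apply]
  refine congrArg (fun q => x q) (funext fun i => ?_)
  simp only [reflE_apply, Pi.sub_apply, Function.update_apply]
  split_ifs with h
  · subst h; simp [ha]
  · rfl

lemma refl_Sh_l (l : Fin d) (k : ℤ) (x : L2 d) :
    comp (reflE l) (Sh (Pi.single l k) x) = Sh (Pi.single l (-k)) (comp (reflE l) x) := by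
  ext j
  simp only [comp_apply, Sh_apply]
  refine congrArg (fun q => x q) (funext fun i => ?_)
  simp only [reflE_apply, Pi.sub_apply, Function.update_apply, Pi.single_apply]
  split_ifs with h
  · simp; ring
  · rfl

lemma refl_X (l : Fin d) (x : L2 d) : comp (reflE l) (X d x) = X d (comp (reflE l) x) := by
  simp only [X, sum_apply, map_sum, add_apply, map_add]
  refine Finset.sum_congr rfl fun i _ => ?_
  by_cases h : i = l
  · subst h
    rw [← Pi.single_neg, refl_Sh_l, refl_Sh_l, neg_neg, add_comm]
  · have : (Pi.single i 1 : Fin d → ℤ) l = 0 := by simp [Ne.symm h]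
    rw [refl_Sh_ne l _ this, refl_Sh_ne l _ (by simp [this])]

lemma green (l : Fin d) {lam : ℝ} {u v : L2 d}
    (h : (2 * d + lam) • v - X d v = u) (hu : ∀ p ∈ half l, u p = 0) :
    inner ℝ (comp (reflE l) u) v =
      ‖mask (slab l (-1)) v‖ ^ 2 - ‖mask (slab l 0) v‖ ^ 2 := by
  set w := comp (reflE l) v with hw
  have e1 : comp (reflE l) u = (2 * d + lam) • w - X d w := by
    rw [← h, map_sub, map_smul, refl_X]
  have e2 : mask (half l) (comp (reflE l) u) = comp (reflE l) u := by
    ext j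
    simp only [mask_apply, comp_apply]
    split_ifs with hj
    · rfl
    · rw [hu]
      simp only [half, Set.mem_ofPred_eq] at hj ⊢
      rw [reflE_apply, Function.update_self]
      omega
  have e3 : mask (half l) u = 0 := by
    ext j
    simp only [mask_apply]
    split_ifs with hj
    · simp [hu j hj]
    · simp
  have q1 : inner ℝ (comp (reflE l) u) v = (2 * d + lam) * inner ℝ w (mask (half l) v)
      - inner ℝ (X d w) (mask (half l) v) := by
    rw [← e2, inner_mask, e1, inner_sub_left, inner_smul_left]
    simp
  have q2 : 0 = (2 * d + lam) * inner ℝ w (mask (half l) v)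
      - inner ℝ (mask (half l) w) (X d v) := by
    have : inner ℝ w (mask (half l) u) = 0 := by rw [e3, inner_zero_right]
    rw [← inner_mask, ← h, inner_sub_right, inner_smul_right] at this
    rw [← inner_mask]
    linarith
  have q3 : inner ℝ (X d w) (mask (half l) v) = ∑ i, (inner ℝ w (Sh (-Pi.single i 1) (mask (half l) v)) + inner ℝ w (Sh (Pi.single i 1) (mask (half l) v))) := by
    rw [real_inner_comm, inner_X]
    refine Finset.sum_congr rfl fun i _ => ?_
    rw [real_inner_comm, inner_Sh, real_inner_comm _ (mask (half l) v), inner_Sh, neg_neg]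
  have q4 : inner ℝ (comp (reflE l) u) v = ∑ i, (
      (inner ℝ w (mask (half l) (Sh (Pi.single i 1) v)) - inner ℝ w (Sh (Pi.single i 1) (mask (half l) v)))
      + (inner ℝ w (mask (half l) (Sh (-Pi.single i 1) v)) - inner ℝ w (Sh (-Pi.single i 1) (mask (half l) v)))) := by
    have : inner ℝ (comp (reflE l) u) v = inner ℝ (mask (half l) w) (X d v) - inner ℝ (X d w) (mask (half l) v) := by linarith
    rw [this, q3, inner_X, ← Finset.sum_sub_distrib]
    refine Finset.sum_congr rfl fun i _ => ?_
    rw [inner_mask, inner_mask]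
    ring
  rw [q4]
  have s1 : inner ℝ w (mask (half l) (Sh (Pi.single l 1) v)) - inner ℝ w (Sh (Pi.single l 1) (mask (half l) v)) = ‖mask (slab l (-1)) v‖ ^ 2 := by
    rw [← inner_sub_right]
    have a1 : mask (half l) (Sh (Pi.single l 1) v) - Sh (Pi.single l 1) (mask (half l) v)
        = mask (slab l 0) (Sh (Pi.single l 1) v) := by
      ext j
      simp only [lp.coeFn_sub, Pi.sub_apply, mask_apply, Sh_apply, half, slab, Set.mem_ofPred_eq, Pi.single_eq_same]
      split_ifs <;> first | omega | simp
    have a2 : mask (slab l 0) w = mask (slab l 0) (Sh (Pi.single l 1) v) := by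
      ext j
      simp only [mask_apply, Sh_apply, slab, Set.mem_ofPred_eq, hw, comp_apply, reflE_apply]
      split_ifs with hj
      · refine congrArg (fun q => v q) (funext fun i => ?_)
        simp only [Function.update_apply, Pi.sub_apply, Pi.single_apply]
        split_ifs with hi
        · subst hi; omega
        · omega
      · rfl
    rw [a1, ← inner_mask_mask, a2, real_inner_self_eq_norm_sq, mask_slab_Sh, Sh_norm]
    simp
  have s2 : inner ℝ w (mask (half l) (Sh (-Pi.single l 1) v)) - inner ℝ w (Sh (-Pi.single l 1) (mask (half l) v)) = -‖mask (slab l 0) v‖ ^ 2 := by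
    rw [← inner_sub_right]
    have a1 : mask (half l) (Sh (-Pi.single l 1) v) - Sh (-Pi.single l 1) (mask (half l) v)
        = - mask (slab l (-1)) (Sh (-Pi.single l 1) v) := by
      ext j
      simp only [lp.coeFn_sub, lp.coeFn_neg, Pi.neg_apply, Pi.sub_apply, mask_apply, Sh_apply, half, slab, Set.mem_ofPred_eq, Pi.single_eq_same]
      split_ifs <;> first | omega | simp
    have a2 : mask (slab l (-1)) w = mask (slab l (-1)) (Sh (-Pi.single l 1) v) := by
      ext j
      simp only [mask_apply, Sh_apply, slab, Set.mem_ofPred_eq, hw, comp_apply, reflE_apply]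
      split_ifs with hj
      · refine congrArg (fun q => v q) (funext fun i => ?_)
        simp only [Function.update_apply, Pi.sub_apply, Pi.neg_apply, Pi.single_apply]
        split_ifs with hi
        · subst hi; omega
        · omega
      · rfl
    rw [a1, inner_neg_right, ← inner_mask_mask, a2, real_inner_self_eq_norm_sq, mask_slab_Sh, Sh_norm]
    simp
  rw [sum_split l _ (‖mask (slab l (-1)) v‖ ^ 2 - ‖mask (slab l 0) v‖ ^ 2) 0]
  · simp
  · rw [s1, s2]; ring
  · intro i hi
    have : (Pi.single i 1 : Fin d → ℤ) l = 0 := by simp [Ne.symm hi]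
    rw [mask_half_Sh l _ this, mask_half_Sh l _ (by simp [this])]
    simp

/-- Descent: from vanishing on two slices to vanishing of the source. -/
lemma descent (l : Fin d) (u : L2 d) (hu : ∀ p ∈ half l, u p = 0) (v : ℝ → L2 d)
    (hv : ∀ lam : ℝ, 0 < lam → (2 * d + lam) • v lam - X d (v lam) = u) (good : Set ℝ)
    (hg : ∀ M : ℝ, ∃ lam ∈ good, M < lam)
    (hz : ∀ lam ∈ good, 0 < lam ∧ ‖mask (slab l 0) (v lam)‖ = 0 ∧ ‖mask (slab l (-1)) (v lam)‖ = 0) :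
    ∀ p, u p = 0 := by
  have slabz : ∀ (n : ℤ) (x : L2 d), ‖mask (slab l n) x‖ = 0 → ∀ p, p l = n → x p = 0 := by
    intro n x hx p hp
    rw [norm_eq_zero] at hx
    have : mask (slab l n) x p = 0 := by rw [hx]; rfl
    simpa [slab, hp] using this
  have main : ∀ k : ℕ, (∀ p, p l = -(k : ℤ) → u p = 0) ∧
      ∀ lam ∈ good, ∀ p, (p l = -(k : ℤ) ∨ p l = -(k : ℤ) - 1) → v lam p = 0 := by
    intro k
    induction k with
    | zero =>
      refine ⟨fun p hp => hu p (by simp [half, hp]), fun lam hl p hp => ?_⟩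
      obtain ⟨_, h0, h1⟩ := hz lam hl
      rcases hp with hp | hp
      · exact slabz 0 _ h0 p (by simpa using hp)
      · exact slabz (-1) _ h1 p (by simpa using hp)
    | succ k ih =>
      have key : ∀ lam ∈ good, ∀ p, p l = -((k + 1 : ℕ) : ℤ) → u p = - v lam (p - Pi.single l 1) := by
        intro lam hl p hp
        push_cast at hp
        have h1 := congrArg (fun x : L2 d => x p) (hv lam (hz lam hl).1)
        simp only [lp.coeFn_sub, lp.coeFn_smul, Pi.sub_apply, Pi.smul_apply, smul_eq_mul, X_apply] at h1
        rw [ih.2 lam hl p (Or.inr (by omega)), sum_split l _ (v lam (p - Pi.single l 1)) 0] at h1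
        · linarith
        · rw [ih.2 lam hl (p + Pi.single l 1) (Or.inl (by simp; omega)), add_zero]
        · intro i hi
          rw [ih.2 lam hl (p + Pi.single i 1) (Or.inr (by simp [Ne.symm hi]; omega)),
            ih.2 lam hl (p - Pi.single i 1) (Or.inr (by simp [Ne.symm hi]; omega)), add_zero]
      have uz : ∀ p, p l = -((k + 1 : ℕ) : ℤ) → u p = 0 := by
        intro p hp
        by_contra hne
        obtain ⟨lam, hl, hM⟩ := hg (‖u‖ / |u p|)
        have hpos := (hz lam hl).1
        have h1 := resolvent_norm hpos (hv lam hpos)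
        have h2 := abs_apply_le (v lam) (p - Pi.single l 1)
        have h3 := key lam hl p hp
        have h4 : |u p| = |v lam (p - Pi.single l 1)| := by rw [h3, abs_neg]
        rw [div_lt_iff₀ (abs_pos.2 hne)] at hM
        nlinarith
      refine ⟨uz, fun lam hl p hp => ?_⟩
      rcases hp with hp | hp
      · exact ih.2 lam hl p (Or.inr (by push_cast at hp; omega))
      · have hq : (p + Pi.single l 1 : Fin d → ℤ) l = -((k + 1 : ℕ) : ℤ) := by simp; push_cast at hp; omega
        have h1 := key lam hl _ hq
        rw [uz _ hq, add_sub_cancel_right] at h1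
        linarith
  intro p
  rcases le_total 0 (p l) with h | h
  · exact hu p h
  · exact (main (p l).natAbs).1 p (by omega)

open Set in
lemma dom_integrable {s : ℝ} (hs : s ∈ Set.Ioo (0 : ℝ) 1) :
    IntegrableOn (fun t : ℝ => min 1 t / t ^ (1 + s)) (Set.Ioi 0) := by
  have hm : Measurable (fun t : ℝ => min 1 t / t ^ (1 + s)) := by fun_prop
  rw [← Ioc_union_Ioi_eq_Ioi (zero_le_one : (0:ℝ) ≤ 1)]
  refine IntegrableOn.union ?_ ?_
  · have h : IntegrableOn (fun t : ℝ => t ^ (-s)) (Ioc 0 1) := by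
      have := intervalIntegral.intervalIntegrable_rpow' (a := 0) (b := 1) (r := -s) (by linarith [hs.2])
      rwa [intervalIntegrable_iff_integrableOn_Ioc_of_le zero_le_one] at this
    refine h.congr_fun (fun t ht => ?_) measurableSet_Ioc
    have ht0 : 0 < t := ht.1
    simp only
    rw [min_eq_right ht.2, Real.rpow_add ht0, Real.rpow_one, Real.rpow_neg ht0.le]
    field_simp
  · have h : IntegrableOn (fun t : ℝ => t ^ (-(1 + s))) (Ioi 1) :=
      integrableOn_Ioi_rpow_of_lt (by linarith [hs.1]) zero_lt_one
    refine h.congr_fun (fun t ht => ?_) measurableSet_Ioi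
    have ht0 : 0 < t := zero_lt_one.trans ht
    simp only
    rw [min_eq_left (le_of_lt ht), Real.rpow_neg ht0.le, one_div]

lemma fubini_part {s : ℝ} (hs : s ∈ Set.Ioo (0 : ℝ) 1) (φ : ℝ → ℝ) (hφ : Continuous φ) (C : ℝ)
    (hC : ∀ t, 0 < t → |φ t| ≤ C * min 1 t) :
    IntegrableOn (fun lam : ℝ => lam ^ s * ∫ t in Set.Ioi (0:ℝ), Real.exp (-(lam * t)) * φ t)
      (Set.Ioi 0) ∧
    ∫ lam in Set.Ioi (0:ℝ), lam ^ s * ∫ t in Set.Ioi (0:ℝ), Real.exp (-(lam * t)) * φ t =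
      Real.Gamma (1 + s) * ∫ t in Set.Ioi (0:ℝ), φ t / t ^ (1 + s) := by
  have hs1 : 0 < 1 + s := by linarith [hs.1]
  set μ : Measure ℝ := volume.restrict (Set.Ioi 0) with hμ
  have hgam : ∀ t : ℝ, 0 < t → ∫ lam, lam ^ s * Real.exp (-(lam * t)) ∂μ
      = Real.Gamma (1 + s) / t ^ (1 + s) := by
    intro t ht
    have := Real.integral_rpow_mul_exp_neg_mul_Ioi hs1 ht
    simp only [add_sub_cancel_left] at this
    simp_rw [mul_comm t] at this
    rw [hμ, this, Real.div_rpow zero_le_one ht.le, Real.one_rpow]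
    ring
  have hintg : ∀ t : ℝ, 0 < t → Integrable (fun lam => lam ^ s * Real.exp (-(lam * t))) μ := by
    intro t ht
    by_contra hc
    have h1 := hgam t ht
    rw [integral_undef hc] at h1
    have : 0 < Real.Gamma (1 + s) / t ^ (1 + s) :=
      div_pos (Real.Gamma_pos_of_pos hs1) (Real.rpow_pos_of_pos ht _)
    linarith
  let f : ℝ → ℝ → ℝ := fun lam t => lam ^ s * (Real.exp (-(lam * t)) * φ t)
  have hfm : Measurable (Function.uncurry f) := by
    have := hφ.measurable
    unfold f Function.uncurry
    fun_prop
  have hf : Integrable (Function.uncurry f) (μ.prod μ) := by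
    rw [integrable_prod_iff' hfm.aestronglyMeasurable]
    constructor
    · refine (ae_restrict_iff' measurableSet_Ioi).2 (Filter.Eventually.of_forall fun t ht => ?_)
      refine ((hintg t ht).mul_const (φ t)).congr (Filter.Eventually.of_forall fun lam => ?_)
      simp [Function.uncurry, f, mul_assoc]
    · have hI : Integrable (fun t => Real.Gamma (1 + s) * (C * (min 1 t / t ^ (1 + s)))) μ :=
        ((dom_integrable hs).const_mul C).const_mul _
      refine hI.mono' ?_ ?_
      · exact hfm.stronglyMeasurable.norm.integral_prod_left'.aestronglyMeasurable
      · refine (ae_restrict_iff' measurableSet_Ioi).2 (Filter.Eventually.of_forall fun t ht => ?_)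
        have ht0 : (0:ℝ) < t := ht
        have e : ∫ lam, ‖Function.uncurry f (lam, t)‖ ∂μ = |φ t| * (Real.Gamma (1 + s) / t ^ (1 + s)) := by
          rw [← hgam t ht, ← integral_const_mul]
          refine setIntegral_congr_fun measurableSet_Ioi fun lam hl => ?_
          have hl0 : (0:ℝ) < lam := hl
          simp only [Function.uncurry, f, norm_mul, Real.norm_eq_abs, Real.abs_exp, abs_of_pos (Real.rpow_pos_of_pos hl0 s)]
          ring
        have hg : 0 < Real.Gamma (1 + s) / t ^ (1 + s) :=
          div_pos (Real.Gamma_pos_of_pos hs1) (Real.rpow_pos_of_pos ht _)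
        rw [e, Real.norm_of_nonneg (by positivity)]
        calc _ ≤ (C * min 1 t) * (Real.Gamma (1 + s) / t ^ (1 + s)) :=
              mul_le_mul_of_nonneg_right (hC t ht) hg.le
          _ = _ := by ring
  constructor
  · have := hf.integral_prod_left
    refine this.congr (Filter.Eventually.of_forall fun lam => ?_)
    simp only [Function.uncurry, f]
    rw [integral_const_mul]
  · have := integral_integral_swap hf
    simp only [f] at this
    simp_rw [integral_const_mul] at this
    rw [this, ← integral_const_mul]
    refine setIntegral_congr_fun measurableSet_Ioi fun t ht => ?_
    have e : (fun lam : ℝ => lam ^ s * (Real.exp (-(lam * t)) * φ t)) =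
      fun lam => lam ^ s * Real.exp (-(lam * t)) * φ t := by ext; ring
    rw [e, integral_mul_const, hgam t ht]
    ring

/-- Matrix element of the semigroup. -/
noncomputable def phi (x y : L2 d) (t : ℝ) : ℝ :=
  Real.exp (-(2 * (d : ℝ) * t)) * inner ℝ x (NormedSpace.exp (t • X d) y)

lemma phi_hasSum (x y : L2 d) {t : ℝ} (ht : 0 ≤ t) :
    HasSum (fun m => heatG d m t * inner ℝ x (Sh m y)) (phi x y t) := by
  have h := heat_hasSum (Sh (d := d)) Sh_zero Sh_add Sh_opNorm ht
  have h2 := h.mapL ((innerSL ℝ x).comp (ContinuousLinearMap.apply ℝ (L2 d) y))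
  simpa [inner_smul_right, phi, X] using h2

lemma inner_Sh_bound (x y : L2 d) (m : Fin d → ℤ) : |inner ℝ x (Sh m y)| ≤ ‖x‖ * ‖y‖ := by
  have := abs_real_inner_le_norm x (Sh m y)
  rwa [Sh_norm] at this

lemma phi_bound (x y : L2 d) {t : ℝ} (ht : 0 ≤ t) : |phi x y t| ≤ ‖x‖ * ‖y‖ := by
  have h := HasSum.norm_le_of_bounded (phi_hasSum x y ht)
    ((heat_hasSum_one (d := d) ht).mul_right (‖x‖ * ‖y‖)) (fun m => by
      rw [norm_mul, Real.norm_of_nonneg (heat_nonneg ht m)]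
      exact mul_le_mul_of_nonneg_left (inner_Sh_bound x y m) (heat_nonneg ht m))
  simpa using h

lemma phi_bound' (hd : 1 ≤ d) (x y : L2 d) (hxy : inner ℝ x y = 0) {t : ℝ} (ht : 0 ≤ t) :
    |phi x y t| ≤ ‖x‖ * ‖y‖ * (2 * d) * min 1 t := by
  refine le_of_tendsto (Filter.Tendsto.abs (phi_hasSum x y ht)) (Filter.Eventually.of_forall fun F => ?_)
  have h0 : heatG d 0 t * inner ℝ x (Sh 0 y) = 0 := by rw [Sh_zero]; simp [hxy]
  have h1 := heat_sum_le hd ht (F.erase 0) (Finset.notMem_erase 0 F)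
  rw [← Finset.sum_erase F h0]
  calc |∑ m ∈ F.erase 0, heatG d m t * inner ℝ x (Sh m y)|
      ≤ ∑ m ∈ F.erase 0, |heatG d m t * inner ℝ x (Sh m y)| := Finset.abs_sum_le_sum_abs _ _
    _ ≤ ∑ m ∈ F.erase 0, heatG d m t * (‖x‖ * ‖y‖) := Finset.sum_le_sum fun m _ => by
        rw [abs_mul, abs_of_nonneg (heat_nonneg ht m)]
        exact mul_le_mul_of_nonneg_left (inner_Sh_bound x y m) (heat_nonneg ht m)
    _ = (∑ m ∈ F.erase 0, heatG d m t) * (‖x‖ * ‖y‖) := by rw [Finset.sum_mul]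
    _ ≤ (2 * d * min 1 t) * (‖x‖ * ‖y‖) := mul_le_mul_of_nonneg_right h1 (by positivity)
    _ = _ := by ring

lemma semi_deriv (x y : L2 d) (c t : ℝ) :
    HasDerivAt (fun t : ℝ => Real.exp (-(c * t)) * inner ℝ x (NormedSpace.exp (t • X d) y))
      (-(Real.exp (-(c * t)) * inner ℝ x (NormedSpace.exp (t • X d) (c • y - X d y)))) t := by
  have h1 : HasDerivAt (fun t : ℝ => Real.exp (-(c * t))) (Real.exp (-(c * t)) * (-(c * 1))) t :=
    ((hasDerivAt_id t).const_mul c).neg.exp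
  have h2 := hasDerivAt_exp_smul_const (𝕂 := ℝ) (X d) t
  have h3 := ((innerSL ℝ x).comp (ContinuousLinearMap.apply ℝ (L2 d) y)).hasFDerivAt.comp_hasDerivAt t h2
  have h4 := h1.mul h3
  refine HasDerivAt.congr_deriv h4 ?_
  simp [inner_sub_right, inner_smul_right]
  ring

lemma phi_continuous (x y : L2 d) : Continuous (phi x y) :=
  continuous_iff_continuousAt.2 fun t => (semi_deriv x y (2 * d) t).continuousAt

lemma laplace (x : L2 d) {lam : ℝ} (hl : 0 < lam) {u v : L2 d}
    (h : (2 * d + lam) • v - X d v = u) :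
    ∫ t in Set.Ioi (0:ℝ), Real.exp (-(lam * t)) * phi x u t = inner ℝ x v := by
  have e : ∀ (y : L2 d) (t : ℝ), Real.exp (-((2 * d + lam) * t)) *
      inner ℝ x (NormedSpace.exp (t • X d) y) = Real.exp (-(lam * t)) * phi x y t := by
    intro y t
    rw [phi, ← mul_assoc, ← Real.exp_add]
    congr 2
    ring
  have hder : ∀ t : ℝ, HasDerivAt (fun t => -(Real.exp (-(lam * t)) * phi x v t))
      (Real.exp (-(lam * t)) * phi x u t) t := by
    intro t
    have := (semi_deriv x v (2 * d + lam) t).neg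
    rw [h, neg_neg, e] at this
    have hfun : (fun t => -(Real.exp (-(lam * t)) * phi x v t)) =
        (fun t => -(Real.exp (-((2 * d + lam) * t)) * inner ℝ x (NormedSpace.exp (t • X d) v))) :=
      funext fun t => congrArg Neg.neg (e v t).symm
    rw [hfun]
    exact this
  have hexp : IntegrableOn (fun t : ℝ => Real.exp (-(lam * t))) (Set.Ioi 0) := by
    have := integrableOn_exp_mul_Ioi (a := -lam) (by linarith) 0
    simpa [neg_mul] using this
  have hintg : IntegrableOn (fun t => Real.exp (-(lam * t)) * phi x u t) (Set.Ioi 0) := by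
    refine Integrable.mono' (hexp.mul_const (‖x‖ * ‖u‖)) ?_ ?_
    · have := phi_continuous x u
      exact Continuous.aestronglyMeasurable (by fun_prop)
    · refine (ae_restrict_iff' measurableSet_Ioi).2 (Filter.Eventually.of_forall fun t ht => ?_)
      rw [norm_mul, Real.norm_of_nonneg (Real.exp_pos _).le]
      exact mul_le_mul_of_nonneg_left (phi_bound x u (le_of_lt ht)) (Real.exp_pos _).le
  have hlim : Filter.Tendsto (fun t => -(Real.exp (-(lam * t)) * phi x v t)) Filter.atTop (nhds 0) := by
    have h1 : Filter.Tendsto (fun t : ℝ => Real.exp (-(lam * t)) * (‖x‖ * ‖v‖)) Filter.atTop (nhds 0) := by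
      have h2 : Filter.Tendsto (fun t : ℝ => Real.exp (-(lam * t))) Filter.atTop (nhds 0) :=
        Real.tendsto_exp_neg_atTop_nhds_zero.comp (Filter.tendsto_id.const_mul_atTop hl)
      simpa using h2.mul_const (‖x‖ * ‖v‖)
    refine squeeze_zero_norm' ?_ h1
    filter_upwards [Filter.eventually_ge_atTop 0] with t ht
    rw [norm_neg, norm_mul, Real.norm_of_nonneg (Real.exp_pos _).le]
    exact mul_le_mul_of_nonneg_left (phi_bound x v ht) (Real.exp_pos _).le
  rw [integral_Ioi_of_hasDerivAt_of_tendsto' (fun t _ => hder t) hintg hlim]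
  simp [phi]

/-- Off-diagonal heat kernel with weight. -/
noncomputable def Fk (d : ℕ) (s : ℝ) (m : Fin d → ℤ) (t : ℝ) : ℝ :=
  if m = 0 then 0 else heatG d m t / t ^ (1 + s)

lemma Fk_nonneg {s : ℝ} (m : Fin d → ℤ) {t : ℝ} (ht : 0 < t) : 0 ≤ Fk d s m t := by
  unfold Fk
  split_ifs
  · exact le_rfl
  · exact div_nonneg (heat_nonneg ht.le m) (Real.rpow_pos_of_pos ht _).le

lemma Fk_sum_le (hd : 1 ≤ d) {s : ℝ} {t : ℝ} (ht : 0 < t) (F : Finset (Fin d → ℤ)) :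
    ∑ m ∈ F, Fk d s m t ≤ 2 * d * (min 1 t / t ^ (1 + s)) := by
  have h1 := heat_sum_le hd ht.le (F.erase 0) (Finset.notMem_erase 0 F)
  have h0 : Fk d s 0 t = 0 := by simp [Fk]
  rw [← Finset.sum_erase F h0]
  have : ∑ m ∈ F.erase 0, Fk d s m t = (∑ m ∈ F.erase 0, heatG d m t) / t ^ (1 + s) := by
    rw [Finset.sum_div]
    refine Finset.sum_congr rfl fun m hm => ?_
    simp [Fk, Finset.ne_of_mem_erase hm]
  rw [this, ← mul_div_assoc]
  exact div_le_div_of_nonneg_right h1 (Real.rpow_pos_of_pos ht _).le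

lemma Fk_measurable {s : ℝ} (m : Fin d → ℤ) : Measurable (Fk d s m) := by
  have := heat_measurable m
  unfold Fk
  split_ifs <;> fun_prop

lemma Fk_integrable (hd : 1 ≤ d) {s : ℝ} (hs : s ∈ Set.Ioo (0 : ℝ) 1) (m : Fin d → ℤ) :
    IntegrableOn (Fk d s m) (Set.Ioi 0) := by
  refine Integrable.mono' ((dom_integrable hs).const_mul (2 * d)) (Fk_measurable m).aestronglyMeasurable ?_
  refine (ae_restrict_iff' measurableSet_Ioi).2 (Filter.Eventually.of_forall fun t ht => ?_)
  rw [Real.norm_of_nonneg (Fk_nonneg m ht)]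
  simpa using Fk_sum_le hd (s := s) ht {m}

lemma Fk_summable (hd : 1 ≤ d) {s : ℝ} (hs : s ∈ Set.Ioo (0 : ℝ) 1) :
    Summable fun m : Fin d → ℤ => ∫ t in Set.Ioi (0:ℝ), Fk d s m t := by
  refine summable_of_sum_le (c := ∫ t in Set.Ioi (0:ℝ), 2 * d * (min 1 t / t ^ (1 + s))) (fun m => ?_) fun F => ?_
  · exact setIntegral_nonneg measurableSet_Ioi fun t ht => Fk_nonneg m ht
  · rw [← integral_finsetSum _ fun m _ => Fk_integrable hd hs m]
    exact setIntegral_mono_on (integrable_finsetSum _ fun m _ => Fk_integrable hd hs m)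
      ((dom_integrable hs).const_mul (2 * d)) measurableSet_Ioi fun t ht => Fk_sum_le hd ht F

lemma Ksh_eq (h s : ℝ) (m : Fin d → ℤ) : Ksh d h s m =
    h ^ (-(2 * s)) * |Real.Gamma (-s)|⁻¹ * ∫ t in Set.Ioi (0:ℝ), Fk d s m t := by
  unfold Ksh Fk
  split_ifs <;> simp

lemma Ksh_nonneg {h : ℝ} (hh : 0 < h) (s : ℝ) (m : Fin d → ℤ) : 0 ≤ Ksh d h s m := by
  rw [Ksh_eq]
  have := setIntegral_nonneg (μ := volume) (measurableSet_Ioi (a := (0:ℝ))) fun t ht => Fk_nonneg (d := d) (s := s) m ht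
  have := Real.rpow_pos_of_pos hh (-(2 * s))
  positivity

lemma Ksh_summable (hd : 1 ≤ d) (h : ℝ) {s : ℝ} (hs : s ∈ Set.Ioo (0 : ℝ) 1) :
    Summable (Ksh d h s) := by
  have := (Fk_summable hd hs).mul_left (h ^ (-(2 * s)) * |Real.Gamma (-s)|⁻¹)
  exact this.congr fun m => (Ksh_eq h s m).symm

lemma K_pairing (hd : 1 ≤ d) (h : ℝ) {s : ℝ} (hs : s ∈ Set.Ioo (0 : ℝ) 1) (x y : L2 d)
    (hxy : inner ℝ x y = 0) :
    HasSum (fun m => Ksh d h s m * inner ℝ x (Sh m y))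
      (h ^ (-(2 * s)) * |Real.Gamma (-s)|⁻¹ * ∫ t in Set.Ioi (0:ℝ), phi x y t / t ^ (1 + s)) := by
  have key := hasSum_integral_of_summable_integral_norm (μ := volume.restrict (Set.Ioi (0:ℝ)))
    (F := fun (m : Fin d → ℤ) t => Fk d s m t * inner ℝ x (Sh m y))
    (fun m => (Fk_integrable hd hs m).mul_const _) (by
      refine Summable.of_nonneg_of_le (fun m => integral_nonneg fun t => norm_nonneg _) (fun m => ?_)
        ((Fk_summable hd hs).mul_right (‖x‖ * ‖y‖))
      have : ∫ t in Set.Ioi (0:ℝ), ‖Fk d s m t * inner ℝ x (Sh m y)‖ =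
          (∫ t in Set.Ioi (0:ℝ), Fk d s m t) * |inner ℝ x (Sh m y)| := by
        rw [← integral_mul_const]
        refine setIntegral_congr_fun measurableSet_Ioi fun t ht => ?_
        simp only [norm_mul, Real.norm_of_nonneg (Fk_nonneg (s := s) m ht), Real.norm_eq_abs]
      rw [this]
      exact mul_le_mul_of_nonneg_left (inner_Sh_bound x y m)
        (setIntegral_nonneg measurableSet_Ioi fun t ht => Fk_nonneg m ht))
  have e : ∫ t in Set.Ioi (0:ℝ), ∑' m, Fk d s m t * inner ℝ x (Sh m y) =
      ∫ t in Set.Ioi (0:ℝ), phi x y t / t ^ (1 + s) := by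
    refine setIntegral_congr_fun measurableSet_Ioi fun t ht => ?_
    have h1 := (phi_hasSum x y (le_of_lt ht)).div_const (t ^ (1 + s))
    rw [← h1.tsum_eq]
    congr 1
    ext m
    unfold Fk
    split_ifs with hm
    · subst hm; rw [Sh_zero]; simp [hxy]
    · ring
  rw [e] at key
  have k2 := key.mul_left (h ^ (-(2 * s)) * |Real.Gamma (-s)|⁻¹)
  have hfun : (fun m => Ksh d h s m * inner ℝ x (Sh m y)) = fun m =>
      h ^ (-(2 * s)) * |Real.Gamma (-s)|⁻¹ *
        ∫ t in Set.Ioi (0:ℝ), Fk d s m t * inner ℝ x (Sh m y) := by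
    ext m
    rw [Ksh_eq, integral_mul_const]
    ring
  rw [hfun]
  exact k2

/-- If the kernel convolution vanishes on the half-space, the pairing vanishes. -/
lemma conv_zero (hd : 1 ≤ d) {h : ℝ} (hh : 0 < h) {s : ℝ} (hs : s ∈ Set.Ioo (0 : ℝ) 1) (l : Fin d) (u : L2 d)
    (hu : ∀ p ∈ half l, u p = 0) (hf : ∀ p ∈ half l, fracLap d h s u p = 0) :
    ∑' m, Ksh d h s m * inner ℝ (comp (reflE l) u) (Sh m u) = 0 := by
  have hsum : Summable fun m => Ksh d h s m • Sh m u := by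
    refine Summable.of_norm_bounded ((Ksh_summable hd h hs).mul_right ‖u‖) fun m => ?_
    rw [norm_smul, Sh_norm, Real.norm_of_nonneg (Ksh_nonneg hh s m)]
  obtain ⟨w, hw⟩ := hsum
  have h1 : HasSum (fun m => Ksh d h s m * inner ℝ (comp (reflE l) u) (Sh m u))
      (inner ℝ (comp (reflE l) u) w) := by
    simpa [inner_smul_right] using hw.mapL (innerSL ℝ (comp (reflE l) u))
  rw [h1.tsum_eq, inner_tsum]
  convert tsum_zero with j
  by_cases hj : j ∈ half l
  · have h2 : HasSum (fun m => Ksh d h s m * u (j - m)) (w j) := by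
      have := hw.mapL (lp.evalCLM ℝ (fun _ : Fin d → ℤ => ℝ) 2 j)
      have hfun : (fun m => Ksh d h s m * u (j - m)) =
          fun m => lp.evalCLM ℝ (fun _ : Fin d → ℤ => ℝ) 2 j (Ksh d h s m • Sh m u) := by
        ext m
        have hev : ∀ y : L2 d, lp.evalCLM ℝ (fun _ : Fin d → ℤ => ℝ) 2 j y = y j := fun _ => rfl
        rw [hev]
        simp
      rw [hfun]
      exact this
    have h3 := hf j hj
    unfold fracLap at h3
    rw [hu j hj] at h3
    have h4 : w j = 0 := by
      rw [← h2.tsum_eq, ← (Equiv.subLeft j).tsum_eq]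
      simp only [zero_sub, neg_mul, tsum_neg, neg_eq_zero] at h3
      rw [← h3]
      congr 1
      ext m
      simp [mul_comm]
    rw [h4, mul_zero]
  · rw [comp_apply, hu, zero_mul]
    simp only [half, Set.mem_ofPred_eq] at hj ⊢
    rw [reflE_apply, Function.update_self]
    omega

lemma main_ucp (hd : 1 ≤ d) {h : ℝ} (hh : 0 < h) {s : ℝ} (hs : s ∈ Set.Ioo (0 : ℝ) 1) (l : Fin d) (u : L2 d)
    (hu : ∀ p ∈ half l, u p = 0) (hf : ∀ p ∈ half l, fracLap d h s u p = 0) : ∀ p, u p = 0 := by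
  set x := comp (reflE l) u with hx
  have hxy : inner ℝ x u = 0 := by
    rw [inner_tsum]
    convert tsum_zero with j
    by_cases hj : j ∈ half l
    · rw [hu j hj, mul_zero]
    · rw [hx, comp_apply, hu, zero_mul]
      simp only [half, Set.mem_ofPred_eq] at hj ⊢
      rw [reflE_apply, Function.update_self]
      omega
  have hI : ∫ t in Set.Ioi (0:ℝ), phi x u t / t ^ (1 + s) = 0 := by
    have h1 := (K_pairing hd h hs x u hxy).tsum_eq
    rw [conv_zero hd hh hs l u hu hf] at h1
    have h2 := Real.rpow_pos_of_pos hh (-(2 * s))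
    have h3 : Real.Gamma (-s) ≠ 0 := by
      apply Real.Gamma_ne_zero
      intro m hm
      have h5 : s = m := by linarith
      have h6 := hs.1
      have h7 := hs.2
      rw [h5] at h6 h7
      have h8 : 0 < m := by exact_mod_cast h6
      have h9 : m < 1 := by exact_mod_cast h7
      omega
    have h4 : h ^ (-(2 * s)) * |Real.Gamma (-s)|⁻¹ ≠ 0 := by
      have := abs_pos.2 h3
      positivity
    exact (mul_eq_zero.1 h1.symm).resolve_left h4
  obtain ⟨i1, i2⟩ := fubini_part hs (phi x u) (phi_continuous x u) (‖x‖ * ‖u‖ * (2 * d))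
    (fun t ht => phi_bound' hd x u hxy ht.le)
  rw [hI, mul_zero] at i2
  choose! v hv using fun (lam : ℝ) (hl : 0 < lam) => exists_resolvent hl u
  have hval : ∀ lam : ℝ, 0 < lam → ∫ t in Set.Ioi (0:ℝ), Real.exp (-(lam * t)) * phi x u t =
      ‖mask (slab l (-1)) (v lam)‖ ^ 2 - ‖mask (slab l 0) (v lam)‖ ^ 2 := fun lam hl => by
    rw [laplace x hl (hv lam hl), hx, green l (hv lam hl) hu]
  have hnn : ∀ lam : ℝ, 0 < lam →
      0 ≤ ‖mask (slab l (-1)) (v lam)‖ ^ 2 - ‖mask (slab l 0) (v lam)‖ ^ 2 := fun lam hl => by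
    have := (slab_compare l hl (hv lam hl) hu).1
    have h0 := norm_nonneg (mask (slab l 0) (v lam))
    nlinarith
  rw [setIntegral_eq_zero_iff_of_nonneg_ae ?_ i1] at i2
  swap
  · refine (ae_restrict_iff' measurableSet_Ioi).2 (Filter.Eventually.of_forall fun lam hl => ?_)
    have hl0 : (0:ℝ) < lam := hl
    simp only [Pi.zero_apply]
    rw [hval lam hl]
    exact mul_nonneg (Real.rpow_pos_of_pos hl0 s).le (hnn lam hl)
  rw [Filter.EventuallyEq, ae_restrict_iff' measurableSet_Ioi] at i2
  refine descent l u hu v hv {lam | 0 < lam ∧ ‖mask (slab l 0) (v lam)‖ = 0 ∧ ‖mask (slab l (-1)) (v lam)‖ = 0}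
    ?_ (fun lam hl => hl)
  intro M
  have hne : ∃ᵐ lam : ℝ, lam ∈ Set.Ioi (max M 0) := by
    rw [frequently_ae_mem_iff]
    simp
  obtain ⟨lam, hlam, h2⟩ := (hne.and_eventually i2).exists
  have hlM : M < lam := (le_max_left _ _).trans_lt hlam
  have hl0 : 0 < lam := (le_max_right _ _).trans_lt hlam
  have h3 := h2 hl0
  simp only [Pi.zero_apply] at h3
  rw [hval lam hl0] at h3
  have h4 := (mul_eq_zero.1 h3).resolve_left (Real.rpow_pos_of_pos hl0 s).ne'
  have h5 : ‖mask (slab l 0) (v lam)‖ = ‖mask (slab l (-1)) (v lam)‖ :=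
    (sq_eq_sq₀ (norm_nonneg _) (norm_nonneg _)).1 (by linarith)
  have h6 := (slab_compare l hl0 (hv lam hl0) hu).2 h5
  exact ⟨lam, ⟨hl0, h6, h5 ▸ h6⟩, hlM⟩

end UCP

/-- Unique continuation from the upper half-space: if `u` is square-summable
and `u = 0 = (-Δ_d)^s u` on `{j : j_d ≥ 0}`, then `u ≡ 0`. -/
theorem halfspace_UCP (d : ℕ) (hd : 1 ≤ d) (h s : ℝ) (hh : 0 < h)
    (hs : s ∈ Set.Ioo (0 : ℝ) 1) (u : (Fin d → ℤ) → ℝ)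
    (hu : Summable fun j : Fin d → ℤ => (u j) ^ 2)
    (hvan : ∀ j : Fin d → ℤ, 0 ≤ j ⟨d - 1, by omega⟩ →
      u j = 0 ∧ fracLap d h s u j = 0) :
    ∀ j : Fin d → ℤ, u j = 0 :=
  UCP.main_ucp hd hh hs ⟨d - 1, by omega⟩ ⟨u, (UCP.memlp_iff u).2 hu⟩
    (fun p hp => (hvan p hp).1) (fun p hp => (hvan p hp).2)
end
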